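/- arXiv:math/0412264 — 2 statements merged into one kernel-verified Lean document; each statement's English description precedes it below -/
import Mathlib

section
/- For a tree T_n with n edges, H^0(T_n) ≅ ℤ{n} ⊕ ℤ{n+1} and H^i(T_n) = 0 for i ≠ 0, where ℤ{j} is ℤ concentrated in degree j. -/
/-- A finite multigraph (possibly with loops and multiple edges), with
vertex type `V` and edges indexed by `Fin n`, edge `e` having endpoints `ends e`. -/
structure OGraph where
  V : Type
  [finV : Fintype V]
  n : ℕ
  ends : Fin n → Sym2 V

attribute [instance] OGraph.finV

namespace OGraph

variable (G : OGraph)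

/-- Two vertices are related if some edge in `s` joins them. -/
def rel (s : Finset (Fin G.n)) (u v : G.V) : Prop := ∃ e ∈ s, G.ends e = s(u, v)

/-- The set of connected components of the spanning subgraph `[G:s]`. -/
def Comp (s : Finset (Fin G.n)) : Type := Quot (G.rel s)

/-- `k(s)`: the number of connected components of the spanning subgraph `[G:s]`. -/
noncomputable def ncomp (s : Finset (Fin G.n)) : ℕ := Nat.card (G.Comp s)

/-- The number of proper colorings of `G` with `m` colors: the value `P_G(m)` of
the chromatic polynomial at the natural number `m`. -/
noncomputable def chromatic (m : ℕ) : ℕ :=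
  Nat.card {c : G.V → Fin m // ∀ e u v, G.ends e = s(u, v) → c u ≠ c v}

end OGraph

namespace OGraph

/-- The map on quotients induced by an implication of relations. -/
def qmap {V : Type} {r r' : V → V → Prop} (h : ∀ u v, r u v → r' u v) :
    Quot r → Quot r' :=
  Quot.lift (Quot.mk r') fun u v huv => Quot.sound (h u v huv)

variable (G : OGraph)

/-- An enhanced state: a subset `s` of the edges together with an assignment of a
color (`1` or `x`; a component is "colored `x`" when the predicate holds) to each
connected component of the spanning subgraph `[G:s]`. -/
abbrev EState := Σ s : Finset (Fin G.n), (G.Comp s → Prop)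

/-- `j(S)`: the number of components colored `x` in the enhanced state `S`. -/
noncomputable def jdeg (S : G.EState) : ℕ := Nat.card {k : G.Comp S.1 // S.2 k}

open Classical in
/-- The enhanced state(s) obtained from `S` by adding the edge `e`: zero if `e`
already belongs to `S` or if the added edge merges two components both colored `x`
(the product `x∗x = 0`); otherwise the enhanced state on `insert e s` whose
coloring is obtained from that of `S` using the product
`1∗1 = 1`, `1∗x = x∗1 = x`. -/
noncomputable def addEdge (S : G.EState) (e : Fin G.n) : G.EState →₀ ℤ :=
  if e ∈ S.1 then 0
  else
    let p : G.Comp S.1 → G.Comp (insert e S.1) :=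
      qmap fun _ _ huv => huv.elim fun f hf => ⟨f, Finset.mem_insert_of_mem hf.1, hf.2⟩
    if ∃ k1 k2 : G.Comp S.1, k1 ≠ k2 ∧ p k1 = p k2 ∧ S.2 k1 ∧ S.2 k2 then 0
    else Finsupp.single ⟨insert e S.1, fun K => ∃ k, p k = K ∧ S.2 k⟩ 1

/-- The differential applied to a single enhanced state: the signed sum, over all
edges `e` not in `S`, of the states obtained by adding `e`; the sign is `(-1)^{n(e)}`
where `n(e)` is the number of edges of `S` ordered before `e`. -/
noncomputable def dState (S : G.EState) : G.EState →₀ ℤ :=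
  ∑ e : Fin G.n, ((-1 : ℤ) ^ (S.1.filter fun f => f < e).card) • G.addEdge S e

/-- The differential of the graph cohomology complex, as a linear endomorphism of
the free `ℤ`-module generated by all enhanced states. -/
noncomputable def diff : (G.EState →₀ ℤ) →ₗ[ℤ] (G.EState →₀ ℤ) :=
  Finsupp.lsum ℤ fun S => LinearMap.toSpanSingleton ℤ _ (G.dState S)

/-- The chain group `C^{i,j}(G)`: the free `ℤ`-module spanned by the enhanced
states with `i` edges and `j` components colored `x`, as a submodule of the free
module on all enhanced states. -/
noncomputable def Cmod (i j : ℕ) : Submodule ℤ (G.EState →₀ ℤ) :=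
  Finsupp.supported ℤ ℤ {S : G.EState | S.1.card = i ∧ G.jdeg S = j}

/-- The cocycles of bidegree `(i,j)`. -/
noncomputable def Zmod (i j : ℕ) : Submodule ℤ (G.EState →₀ ℤ) :=
  LinearMap.ker G.diff ⊓ G.Cmod i j

/-- The coboundaries: `0` for `i = 0`, the image of `C^{i,j}` for `i + 1`. -/
noncomputable def Bmod : ℕ → ℕ → Submodule ℤ (G.EState →₀ ℤ)
  | 0, _ => ⊥
  | i + 1, j => Submodule.map G.diff (G.Cmod i j)

/-- The graph cohomology group `H^{i,j}(G)` (cocycles modulo coboundaries in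
bidegree `(i,j)`). -/
noncomputable def Hmod (i j : ℕ) : Type :=
  (G.Zmod i j).toAddSubgroup ⧸
    (AddSubgroup.comap (G.Zmod i j).toAddSubgroup.subtype (G.Bmod i j).toAddSubgroup)

noncomputable instance (i j : ℕ) : AddCommGroup (G.Hmod i j) := by
  delta Hmod; infer_instance

end OGraph

namespace OGraph

section general
variable (G : OGraph)

def cmk (s : Finset (Fin G.n)) (v : G.V) : G.Comp s := Quot.mk _ v

variable {G}

theorem cmk_surj (s : Finset (Fin G.n)) (K : G.Comp s) : ∃ v, G.cmk s v = K :=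
  Quot.exists_rep K

def eqv (s : Finset (Fin G.n)) (v w : G.V) : Prop := G.cmk s v = G.cmk s w

theorem eqv.symm {s : Finset (Fin G.n)} {v w : G.V} (h : eqv s v w) : eqv s w v := Eq.symm h
theorem eqv.trans {s : Finset (Fin G.n)} {u v w : G.V} (h : eqv s u v) (h' : eqv s v w) :
    eqv s u w := Eq.trans h h'
theorem eqv.refl (s : Finset (Fin G.n)) (v : G.V) : eqv s v v := rfl

theorem eqv_of_edge {s : Finset (Fin G.n)} {v w : G.V} {e : Fin G.n} (he : e ∈ s)
    (h : G.ends e = s(v, w)) : eqv s v w := Quot.sound ⟨e, he, h⟩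

/-- An equivalence relation containing the edges contains `eqv`. -/
theorem eqv_least {s : Finset (Fin G.n)} {R : G.V → G.V → Prop} (hR : Equivalence R)
    (h : ∀ u v, G.rel s u v → R u v) {u v : G.V} (huv : eqv s u v) : R u v := by
  have h1 : Relation.EqvGen (G.rel s) u v := Quot.eqvGen_exact huv
  induction h1 with
  | rel x y hxy => exact h _ _ hxy
  | refl x => exact hR.refl _
  | symm x y _ ih => exact hR.symm (ih (by assumption |> Quot.eqvGen_sound))
  | trans x y z h1 h2 ih1 ih2 =>
    exact hR.trans (ih1 (Quot.eqvGen_sound h1)) (ih2 (Quot.eqvGen_sound h2))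

theorem eqv_mono {s t : Finset (Fin G.n)} (hst : s ⊆ t) {v w : G.V} (h : eqv s v w) :
    eqv t v w := by
  refine eqv_least (R := eqv t) ⟨fun _ => rfl, fun h => h.symm, fun h h' => h.trans h'⟩ ?_ h
  rintro u v ⟨e, he, hh⟩
  exact eqv_of_edge (hst he) hh

theorem eqv_insert {s : Finset (Fin G.n)} {f : Fin G.n} {a b : G.V} (hf : G.ends f = s(a, b))
    {v w : G.V} : eqv (insert f s) v w ↔
      eqv s v w ∨ (eqv s v a ∧ eqv s w b) ∨ (eqv s v b ∧ eqv s w a) := by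
  constructor
  · intro h
    refine eqv_least (R := fun v w => eqv s v w ∨ (eqv s v a ∧ eqv s w b) ∨
      (eqv s v b ∧ eqv s w a)) ⟨?_, ?_, ?_⟩ ?_ h
    · intro x; left; rfl
    · simp only [eqv]; grind
    · simp only [eqv]; grind
    · rintro u v ⟨e, he, hh⟩
      rcases Finset.mem_insert.1 he with rfl | he
      · rw [hf] at hh
        rcases Sym2.eq_iff.1 hh with ⟨rfl, rfl⟩ | ⟨rfl, rfl⟩
        · right; left; exact ⟨rfl, rfl⟩
        · right; right; exact ⟨rfl, rfl⟩
      · left; exact eqv_of_edge he hh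
  · have hab : eqv (insert f s) a b := eqv_of_edge (Finset.mem_insert_self _ _) hf
    have hs : s ⊆ insert f s := Finset.subset_insert _ _
    rintro (h | ⟨h, h'⟩ | ⟨h, h'⟩)
    · exact eqv_mono hs h
    · exact (eqv_mono hs h).trans (hab.trans (eqv_mono hs h').symm)
    · exact (eqv_mono hs h).trans (hab.symm.trans (eqv_mono hs h').symm)

def col (S : G.EState) (v : G.V) : Prop := S.2 (G.cmk S.1 v)

theorem col_congr {S : G.EState} {v w : G.V} (h : eqv S.1 v w) : col S v ↔ col S w := by
  unfold col; rw [show G.cmk S.1 v = G.cmk S.1 w from h]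

theorem estate_ext {S S' : G.EState} (h : S.1 = S'.1) (h' : ∀ v, col S v ↔ col S' v) :
    S = S' := by
  obtain ⟨s, c⟩ := S
  obtain ⟨s', c'⟩ := S'
  obtain rfl : s = s' := h
  congr 1
  funext K
  obtain ⟨v, rfl⟩ := cmk_surj s K
  exact propext (h' v)

def st (s : Finset (Fin G.n)) (P : G.V → Prop) : G.EState := ⟨s, fun K => ∃ v, G.cmk s v = K ∧ P v⟩

theorem col_st {s : Finset (Fin G.n)} {P : G.V → Prop} {w : G.V} :
    col (st s P) w ↔ ∃ v, eqv s v w ∧ P v := Iff.rfl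

def good (S : G.EState) (t : Finset (Fin G.n)) : Prop :=
  ∀ v w, col S v → col S w → eqv t v w → eqv S.1 v w

open Classical in
noncomputable def push (S : G.EState) (t : Finset (Fin G.n)) : G.EState →₀ ℤ :=
  if good S t then Finsupp.single (st t (col S)) 1 else 0

theorem addEdge_of_mem {S : G.EState} {e : Fin G.n} (h : e ∈ S.1) : G.addEdge S e = 0 := by
  simp [addEdge, h]

theorem addEdge_of_notMem {S : G.EState} {e : Fin G.n} (h : e ∉ S.1) :
    G.addEdge S e = push S (insert e S.1) := by
  unfold addEdge push
  rw [if_neg h]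
  have hp : ∀ v, (qmap (r := G.rel S.1) (r' := G.rel (insert e S.1))
    fun _ _ huv => huv.elim fun f hf => ⟨f, Finset.mem_insert_of_mem hf.1, hf.2⟩) (G.cmk S.1 v)
      = G.cmk (insert e S.1) v := fun v => rfl
  by_cases hg : good S (insert e S.1)
  · rw [if_pos hg]
    dsimp only
    rw [if_neg]
    · congr 1
      unfold st
      congr 1
      funext K
      apply propext
      constructor
      · rintro ⟨k, hk, hk'⟩
        obtain ⟨v, rfl⟩ := cmk_surj _ k
        exact ⟨v, hk, hk'⟩
      · rintro ⟨v, hv, hv'⟩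
        exact ⟨G.cmk _ v, hv, hv'⟩
    · rintro ⟨k1, k2, hne, hk, h1, h2⟩
      obtain ⟨v, rfl⟩ := cmk_surj _ k1
      obtain ⟨w, rfl⟩ := cmk_surj _ k2
      exact hne (hg v w h1 h2 hk)
  · rw [if_neg hg]
    dsimp only
    rw [if_pos]
    unfold good at hg
    push Not at hg
    obtain ⟨v, w, hv, hw, h1, h2⟩ := hg
    exact ⟨G.cmk _ v, G.cmk _ w, h2, h1, hv, hw⟩

theorem st_fst (s : Finset (Fin G.n)) (P : G.V → Prop) : (st s P).1 = s := rfl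

theorem good_trans {S : G.EState} {t t' : Finset (Fin G.n)} (h1 : S.1 ⊆ t) (h2 : t ⊆ t') :
    good S t' ↔ good S t ∧ good (st t (col S)) t' := by
  constructor
  · intro h
    refine ⟨fun v w hv hw hvw => h v w hv hw (eqv_mono h2 hvw), ?_⟩
    rintro v w ⟨v', hv', cv⟩ ⟨w', hw', cw⟩ hvw
    change eqv t v' v at hv'
    change eqv t w' w at hw'
    have := h v' w' cv cw ((eqv_mono h2 hv').trans (hvw.trans (eqv_mono h2 hw').symm))
    exact hv'.symm.trans ((eqv_mono h1 this).trans hw')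
  · rintro ⟨h, h'⟩ v w hv hw hvw
    exact h v w hv hw (h' v w ⟨v, rfl, hv⟩ ⟨w, rfl, hw⟩ hvw)

theorem st_st {S : G.EState} {t t' : Finset (Fin G.n)} (h2 : t ⊆ t') :
    st t' (col (st t (col S))) = st t' (col S) := by
  refine estate_ext rfl fun v => ?_
  rw [col_st, col_st]
  constructor
  · rintro ⟨w, hw, w', hw', c⟩
    exact ⟨w', (eqv_mono h2 hw').trans hw, c⟩
  · rintro ⟨w, hw, c⟩
    exact ⟨w, hw, w, rfl, c⟩

noncomputable def addL (e : Fin G.n) : (G.EState →₀ ℤ) →ₗ[ℤ] (G.EState →₀ ℤ) :=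
  Finsupp.lsum ℤ fun S => LinearMap.toSpanSingleton ℤ _ (G.addEdge S e)

theorem addL_single (e : Fin G.n) (S : G.EState) :
    addL e (Finsupp.single S 1) = G.addEdge S e := by
  simp [addL]

theorem diff_single (S : G.EState) : G.diff (Finsupp.single S 1) = G.dState S := by
  simp [diff]

theorem addEdge_cases (S : G.EState) (e : Fin G.n) :
    G.addEdge S e = 0 ∨ (e ∉ S.1 ∧ good S (insert e S.1) ∧
      G.addEdge S e = Finsupp.single (st (insert e S.1) (col S)) 1) := by
  by_cases h : e ∈ S.1
  · left; exact addEdge_of_mem h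
  · rw [addEdge_of_notMem h, push]
    by_cases hg : good S (insert e S.1)
    · right; rw [if_pos hg]; exact ⟨h, hg, rfl⟩
    · left; rw [if_neg hg]

theorem addL_addEdge {S : G.EState} {e f : Fin G.n} (he : e ∉ S.1) (hf : f ∉ S.1) (hne : f ≠ e) :
    addL f (G.addEdge S e) = push S (insert f (insert e S.1)) := by
  have h1 : S.1 ⊆ insert e S.1 := Finset.subset_insert _ _
  have h2 : insert e S.1 ⊆ insert f (insert e S.1) := Finset.subset_insert _ _
  rw [addEdge_of_notMem he, push, push]
  by_cases hg : good S (insert e S.1)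
  · rw [if_pos hg, addL_single, addEdge_of_notMem (by simp [st_fst, hf, hne]), push]
    rw [show (st (insert e S.1) (col S)).1 = insert e S.1 from rfl, st_st h2]
    by_cases hg' : good (st (insert e S.1) (col S)) (insert f (insert e S.1))
    · rw [if_pos hg', if_pos ((good_trans h1 h2).2 ⟨hg, hg'⟩)]
    · rw [if_neg hg', if_neg fun h => hg' ((good_trans h1 h2).1 h).2]
  · rw [if_neg hg, if_neg fun h => hg ((good_trans h1 h2).1 h).1, map_zero]

def sgn (s : Finset (Fin G.n)) (e : Fin G.n) : ℤ := (-1 : ℤ) ^ (s.filter fun f => f < e).card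

theorem dState_eq (S : G.EState) : G.dState S = ∑ e, sgn S.1 e • G.addEdge S e := rfl

theorem sgn_insert_lt {s : Finset (Fin G.n)} {e f : Fin G.n} (he : e ∉ s) (h : e < f) :
    sgn (insert e s) f = - sgn s f := by
  unfold sgn
  rw [Finset.filter_insert, if_pos h, Finset.card_insert_of_notMem (by simp [he]), pow_succ]
  ring

theorem sgn_insert_gt {s : Finset (Fin G.n)} {e f : Fin G.n} (h : f < e) :
    sgn (insert e s) f = sgn s f := by
  unfold sgn
  rw [Finset.filter_insert, if_neg (by exact not_lt.2 h.le)]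

theorem diff_addEdge (S : G.EState) (e : Fin G.n) :
    G.diff (G.addEdge S e) = ∑ f, sgn (insert e S.1) f • addL f (G.addEdge S e) := by
  rcases addEdge_cases S e with h | ⟨-, -, h⟩
  · simp [h]
  · rw [h, diff_single, dState_eq]
    simp only [addL_single, st_fst]

theorem diff_dState (S : G.EState) : G.diff (G.dState S) = 0 := by
  have key : G.diff (G.dState S) = ∑ e, ∑ f, (sgn S.1 e * sgn (insert e S.1) f) •
      addL f (G.addEdge S e) := by
    rw [dState_eq, map_sum]
    refine Finset.sum_congr rfl fun e _ => ?_
    rw [map_smul, diff_addEdge, Finset.smul_sum]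
    refine Finset.sum_congr rfl fun f _ => ?_
    rw [smul_smul]
  have anti : ∀ e f, (sgn S.1 e * sgn (insert e S.1) f) • addL f (G.addEdge S e) =
      - ((sgn S.1 f * sgn (insert f S.1) e) • addL e (G.addEdge S f)) := by
    have same : ∀ e, addL e (G.addEdge S e) = 0 := by
      intro e
      rcases addEdge_cases S e with h | ⟨-, -, h⟩
      · simp [h]
      · rw [h, addL_single, addEdge_of_mem (by simp [st_fst])]
    have mem : ∀ e f, f ∈ S.1 → addL f (G.addEdge S e) = 0 := by
      intro e f hf
      rcases addEdge_cases S e with h | ⟨-, -, h⟩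
      · simp [h]
      · rw [h, addL_single, addEdge_of_mem (by simp [st_fst, hf])]
    intro e f
    by_cases hne : f = e
    · subst hne; simp [same]
    by_cases he : e ∈ S.1
    · rw [mem f e he, addEdge_of_mem he]; simp
    by_cases hf : f ∈ S.1
    · rw [mem e f hf, addEdge_of_mem hf]; simp
    rw [addL_addEdge he hf hne, addL_addEdge hf he (Ne.symm hne), Finset.insert_comm e f, ← neg_smul]
    congr 1
    rcases lt_or_gt_of_ne hne with h | h
    · rw [sgn_insert_gt h, sgn_insert_lt hf h]; ring
    · rw [sgn_insert_gt h, sgn_insert_lt he h]; ring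
  have h2 : G.diff (G.dState S) = - G.diff (G.dState S) := by
    conv_lhs => rw [key]
    rw [Finset.sum_comm, key, ← Finset.sum_neg_distrib]
    refine Finset.sum_congr rfl fun e _ => ?_
    rw [← Finset.sum_neg_distrib]
    exact Finset.sum_congr rfl fun f _ => anti f e
  exact self_eq_neg.1 h2

theorem diff_diff (z : G.EState →₀ ℤ) : G.diff (G.diff z) = 0 := by
  have : G.diff ∘ₗ G.diff = 0 := by
    refine Finsupp.lhom_ext' fun S => LinearMap.ext_ring ?_
    simp [diff_single, diff_dState]
  exact LinearMap.congr_fun this z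

theorem jdeg_st {S : G.EState} {t : Finset (Fin G.n)} (ht : S.1 ⊆ t) (hg : good S t) :
    G.jdeg (st t (col S)) = G.jdeg S := by
  unfold jdeg
  symm
  have hw : ∀ k : G.Comp S.1, G.cmk S.1 k.out = k := fun k => Quot.out_eq k
  refine Nat.card_eq_of_bijective
    (fun k : {k : G.Comp S.1 // S.2 k} => (⟨G.cmk t k.1.out, k.1.out, rfl, by
      unfold col; rw [hw]; exact k.2⟩ : {k : G.Comp t // (st t (col S)).2 k})) ⟨?_, ?_⟩
  · rintro ⟨k, hk⟩ ⟨k', hk'⟩ h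
    have h' : eqv t k.out k'.out := congrArg Subtype.val h
    have := hg _ _ (by unfold col; rw [hw]; exact hk) (by unfold col; rw [hw]; exact hk') h'
    apply Subtype.ext
    change G.cmk S.1 _ = G.cmk S.1 _ at this
    rwa [hw, hw] at this
  · rintro ⟨K, v, rfl, hv⟩
    refine ⟨⟨G.cmk S.1 v, hv⟩, Subtype.ext ?_⟩
    exact eqv_mono ht (hw (G.cmk S.1 v))

theorem dState_ne {S u : G.EState} (h : G.dState S u ≠ 0) :
    ∃ f, f ∉ S.1 ∧ good S (insert f S.1) ∧ u = st (insert f S.1) (col S) := by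
  rw [dState_eq, Finsupp.finsetSum_apply] at h
  obtain ⟨f, -, hf⟩ := Finset.exists_ne_zero_of_sum_ne_zero h
  rcases addEdge_cases S f with h | ⟨h1, h2, h⟩
  · simp [h] at hf
  · refine ⟨f, h1, h2, ?_⟩
    by_contra hne
    rw [h] at hf
    simp [Ne.symm hne] at hf

theorem dState_apply {S : G.EState} {f : Fin G.n} (hf : f ∉ S.1) (hg : good S (insert f S.1)) :
    G.dState S (st (insert f S.1) (col S)) = sgn S.1 f := by
  rw [dState_eq, Finsupp.finsetSum_apply, Finset.sum_eq_single f]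
  · rw [addEdge_of_notMem hf, push, if_pos hg]; simp
  · intro e _ hne
    rcases addEdge_cases S e with h | ⟨h1, h2, h⟩
    · simp [h]
    · rw [h, Finsupp.smul_apply, Finsupp.single_eq_of_ne, smul_zero]
      intro hh
      have : insert e S.1 = insert f S.1 := congrArg Sigma.fst hh.symm
      have h3 : e ∈ insert f S.1 := this ▸ Finset.mem_insert_self _ _
      rcases Finset.mem_insert.1 h3 with h3 | h3
      · exact hne h3
      · exact h1 h3
  · simp

theorem sgn_mul_self (s : Finset (Fin G.n)) (e : Fin G.n) : sgn s e * sgn s e = 1 := by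
  unfold sgn; rw [← mul_pow]; simp

def grade (G : OGraph) (i j : ℕ) : Set G.EState := {S | S.1.card = i ∧ G.jdeg S = j}

theorem dState_grade {S u : G.EState} {i j : ℕ} (hS : S ∈ G.grade i j) (h : G.dState S u ≠ 0) :
    u ∈ G.grade (i+1) j := by
  obtain ⟨f, h1, h2, rfl⟩ := dState_ne h
  refine ⟨?_, ?_⟩
  · rw [st_fst, Finset.card_insert_of_notMem h1, hS.1]
  · rw [jdeg_st (Finset.subset_insert _ _) h2, hS.2]

theorem diff_apply (z : G.EState →₀ ℤ) (u : G.EState) :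
    G.diff z u = z.sum fun S a => a * G.dState S u := by
  simp [diff, Finsupp.sum, Finsupp.finsetSum_apply]

theorem diff_Cmod {i j : ℕ} {z : G.EState →₀ ℤ} (hz : z ∈ G.Cmod i j) :
    G.diff z ∈ G.Cmod (i+1) j := by
  refine (Finsupp.mem_supported ℤ _).2 fun u hu => ?_
  have hu' : G.diff z u ≠ 0 := by simpa using hu
  rw [diff_apply] at hu'
  obtain ⟨S, hS, h⟩ := Finset.exists_ne_zero_of_sum_ne_zero hu'
  exact dState_grade ((Finsupp.mem_supported ℤ _).1 hz hS) (right_ne_zero_of_mul h)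

end general
end OGraph

namespace OGraph

/-- A rooted-tree structure on `G`. -/
structure Rooting (G : OGraph) where
  root : G.V
  rk : G.V → ℕ
  rk_inj : Function.Injective rk
  par : Fin G.n → G.V
  child : Fin G.n → G.V
  child_inj : Function.Injective child
  ends_eq : ∀ e, G.ends e = s(par e, child e)
  lt : ∀ e, rk (par e) < rk (child e)
  ne_root : ∀ e, child e ≠ root
  surj : ∀ v, v ≠ root → ∃ e, child e = v

theorem exists_dist (G : OGraph) (hconn : Subsingleton (G.Comp Finset.univ)) (r : G.V) :
    ∃ d : G.V → ℕ, ∀ v, v ≠ r → ∃ e u, G.ends e = s(u, v) ∧ d u < d v := by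
  classical
  let H : SimpleGraph G.V := SimpleGraph.fromRel (G.rel Finset.univ)
  have hreach : ∀ v, H.Reachable v r := by
    intro v
    refine eqv_least (R := H.Reachable) (s := Finset.univ) H.reachable_is_equivalence ?_
      (Subsingleton.elim _ _)
    intro u v h
    by_cases huv : u = v
    · subst huv; exact SimpleGraph.Reachable.refl _
    · exact SimpleGraph.Adj.reachable ((SimpleGraph.fromRel_adj _ _ _).2 ⟨huv, Or.inl h⟩)
  refine ⟨fun v => H.dist v r, fun v hv => ?_⟩
  obtain ⟨p, hp⟩ := (hreach v).exists_walk_length_eq_dist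
  cases p with
  | nil => exact absurd rfl hv
  | @cons _ u _ h q =>
    have hlt : H.dist u r < H.dist v r := by
      rw [← hp, SimpleGraph.Walk.length_cons]
      exact Nat.lt_succ_of_le (SimpleGraph.dist_le q)
    rcases ((SimpleGraph.fromRel_adj _ _ _).1 h).2 with ⟨e, -, he⟩ | ⟨e, -, he⟩
    · exact ⟨e, u, he.trans Sym2.eq_swap, hlt⟩
    · exact ⟨e, u, he, hlt⟩

theorem exists_rooting (G : OGraph) (hcard : Fintype.card G.V = G.n + 1)
    (hconn : Subsingleton (G.Comp Finset.univ)) : Nonempty (Rooting G) := by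
  classical
  have : Nonempty G.V := Fintype.card_pos_iff.1 (by omega)
  obtain ⟨r⟩ := this
  obtain ⟨d, hd⟩ := exists_dist G hconn r
  let ix := Fintype.equivFin G.V
  let N := Fintype.card G.V
  let rk : G.V → ℕ := fun v => d v * N + ix v
  have hlt : ∀ u v, d u < d v → rk u < rk v := by
    intro u v h
    have h1 : (ix u : ℕ) < N := (ix u).2
    have : (d u + 1) * N ≤ d v * N := Nat.mul_le_mul_right _ h
    simp only [rk]
    nlinarith
  have hinj : Function.Injective rk := by
    intro u v h
    rcases lt_trichotomy (d u) (d v) with h1 | h1 | h1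
    · exact absurd h (hlt _ _ h1).ne
    · simp only [rk, h1] at h
      exact ix.injective (Fin.ext (by omega))
    · exact absurd h (hlt _ _ h1).ne'
  choose ε π hε hπ using hd
  let E : {v // v ≠ r} → Fin G.n := fun v => ε v.1 v.2
  have hEinj : Function.Injective E := by
    rintro ⟨v, hv⟩ ⟨w, hw⟩ h
    have h1 : ε v hv = ε w hw := h
    have h2 : s(π v hv, v) = s(π w hw, w) := by rw [← hε, ← hε, h1]
    rcases Sym2.eq_iff.1 h2 with ⟨-, h3⟩ | ⟨h3, h4⟩
    · exact Subtype.ext h3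
    · have a := hπ v hv
      have b := hπ w hw
      rw [h3] at a; rw [← h4] at b; omega
  have hE : Function.Bijective E := by
    rw [Fintype.bijective_iff_injective_and_card]
    refine ⟨hEinj, ?_⟩
    rw [Fintype.card_subtype_compl, Fintype.card_fin, hcard, Fintype.card_subtype_eq]
    omega
  let F := (Equiv.ofBijective E hE).symm
  have hF : ∀ e, ε (F e).1 (F e).2 = e := fun e => (Equiv.ofBijective E hE).apply_symm_apply e
  exact ⟨{
    root := r
    rk := rk
    rk_inj := hinj
    par := fun e => π (F e).1 (F e).2
    child := fun e => (F e).1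
    child_inj := fun e f h => F.injective (Subtype.ext h)
    ends_eq := fun e => by conv_lhs => rw [← hF e, hε]
    lt := fun e => hlt _ _ (hπ _ _)
    ne_root := fun e => (F e).2
    surj := fun v hv => ⟨E ⟨v, hv⟩, by
      have := (Equiv.ofBijective E hE).symm_apply_apply ⟨v, hv⟩
      exact congrArg Subtype.val this⟩ }⟩

section tree
variable {G : OGraph} (T : Rooting G)

inductive Rooting.Desc (c : G.V) : G.V → Prop
  | refl : Rooting.Desc c c
  | step (e : Fin G.n) : Rooting.Desc c (T.par e) → Rooting.Desc c (T.child e)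

theorem desc_le {c v : G.V} (h : T.Desc c v) : T.rk c ≤ T.rk v := by
  induction h with
  | refl => exact le_rfl
  | step e _ ih => exact ih.trans (T.lt e).le

theorem eqv_child_le {s : Finset (Fin G.n)} {f : Fin G.n} (hf : f ∉ s) {v : G.V}
    (h : eqv s (T.child f) v) : T.rk (T.child f) ≤ T.rk v := by
  apply desc_le T
  have key : ∀ e ∈ s, (T.Desc (T.child f) (T.par e) ↔ T.Desc (T.child f) (T.child e)) := by
    intro e he
    refine ⟨fun h => .step e h, fun h => ?_⟩
    generalize hx : T.child e = x at h
    cases h with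
    | refl => exact absurd (T.child_inj hx ▸ he) hf
    | step e' h' => rwa [T.child_inj hx]
  refine (eqv_least (R := fun u v => (T.Desc (T.child f) u ↔ T.Desc (T.child f) v))
    ⟨fun _ => Iff.rfl, fun h => h.symm, fun h h' => h.trans h'⟩ ?_ h).1 .refl
  rintro u v ⟨e, he, h⟩
  rw [T.ends_eq e] at h
  rcases Sym2.eq_iff.1 h with ⟨rfl, rfl⟩ | ⟨rfl, rfl⟩
  · exact key e he
  · exact (key e he).symm

def Rooting.ρ (e : Fin G.n) : ℕ := T.rk (T.child e)

theorem ρ_inj {e f : Fin G.n} (h : T.ρ e = T.ρ f) : e = f := T.child_inj (T.rk_inj h)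

theorem not_par_child {s : Finset (Fin G.n)} {f g : Fin G.n} (hg : g ∉ s) (h : T.ρ f ≤ T.ρ g) :
    ¬ eqv s (T.child g) (T.par f) := fun h' => by
  have h1 := eqv_child_le T hg h'
  have h2 := T.lt f
  unfold Rooting.ρ at h
  omega

theorem not_child_child {s : Finset (Fin G.n)} {f g : Fin G.n} (hf : f ∉ s) (hg : g ∉ s)
    (h : f ≠ g) : ¬ eqv s (T.child g) (T.child f) := fun h' =>
  h (ρ_inj T (le_antisymm (eqv_child_le T hf h'.symm) (eqv_child_le T hg h')))

def isU (S : G.EState) (e : Fin G.n) : Prop :=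
  e ∈ S.1 ∧ ∀ g, T.ρ e < T.ρ g → g ∉ S.1 ∧ col S (T.child g)

def isD (S : G.EState) (e : Fin G.n) : Prop :=
  (e ∉ S.1 ∧ ¬ col S (T.child e)) ∧ ∀ g, T.ρ e < T.ρ g → g ∉ S.1 ∧ col S (T.child g)

theorem trichotomy (S : G.EState) : (∃ e, isU T S e) ∨ (∃ e, isD T S e) ∨
    (∀ g, g ∉ S.1 ∧ col S (T.child g)) := by
  classical
  by_cases h : ∃ e, ¬ (e ∉ S.1 ∧ col S (T.child e))
  · obtain ⟨e, he, hmax⟩ := Finset.exists_max_image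
      (Finset.univ.filter fun e => ¬ (e ∉ S.1 ∧ col S (T.child e))) T.ρ
      (by obtain ⟨e, he⟩ := h; exact ⟨e, by simpa using he⟩)
    have hm : ∀ g, T.ρ e < T.ρ g → g ∉ S.1 ∧ col S (T.child g) := by
      intro g hg
      by_contra hc
      exact absurd (hmax g (Finset.mem_filter.2 ⟨Finset.mem_univ _, hc⟩)) (by omega)
    have he' := (Finset.mem_filter.1 he).2
    by_cases hes : e ∈ S.1
    · exact Or.inl ⟨e, hes, hm⟩
    · exact Or.inr (Or.inl ⟨e, ⟨hes, fun hc => he' ⟨hes, hc⟩⟩, hm⟩)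
  · push Not at h
    exact Or.inr (Or.inr h)

theorem not_U_D {S : G.EState} {e f : Fin G.n} (h : isU T S e) (h' : isD T S f) : False := by
  rcases lt_trichotomy (T.ρ e) (T.ρ f) with h1 | h1 | h1
  · exact h'.1.2 (h.2 f h1).2
  · have := ρ_inj T h1; subst this; exact h'.1.1 h.1
  · exact (h'.2 e h1).1 h.1

theorem U_unique {S : G.EState} {e f : Fin G.n} (h : isU T S e) (h' : isU T S f) : e = f := by
  rcases lt_trichotomy (T.ρ e) (T.ρ f) with h1 | h1 | h1
  · exact absurd h'.1 (h.2 f h1).1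
  · exact ρ_inj T h1
  · exact absurd h.1 (h'.2 e h1).1

/-- adding `f` does not change the status of later edges. -/
theorem merge_col {S : G.EState} {f g : Fin G.n} (hf : f ∉ S.1) (hg : g ∉ S.1)
    (h : T.ρ f < T.ρ g) : col (st (insert f S.1) (col S)) (T.child g) ↔ col S (T.child g) := by
  rw [col_st]
  constructor
  · rintro ⟨v, hv, hc⟩
    rcases (eqv_insert (T.ends_eq f)).1 hv with h1 | ⟨-, h1⟩ | ⟨-, h1⟩
    · exact (col_congr h1).1 hc
    · exact absurd h1 (not_child_child T hf hg (by rintro rfl; omega))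
    · exact absurd h1 (not_par_child T hg h.le)
  · intro hc; exact ⟨_, rfl, hc⟩

theorem good_of_uncol {S : G.EState} {f : Fin G.n} (hc : ¬ col S (T.child f)) :
    good S (insert f S.1) := by
  intro v w hv hw h
  rcases (eqv_insert (T.ends_eq f)).1 h with h1 | ⟨-, h1⟩ | ⟨h1, -⟩
  · exact h1
  · exact absurd ((col_congr h1).1 hw) hc
  · exact absurd ((col_congr h1).1 hv) hc

theorem later_merge {S : G.EState} {e f : Fin G.n} (hf : f ∉ S.1) (hef : T.ρ e ≤ T.ρ f)
    (h : ∀ g, T.ρ e < T.ρ g → g ∉ S.1 ∧ col S (T.child g)) :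
    isU T (st (insert f S.1) (col S)) f := by
  refine ⟨Finset.mem_insert_self _ _, fun g hg => ?_⟩
  have := h g (by omega)
  refine ⟨?_, (merge_col T hf this.1 hg).2 this.2⟩
  rw [st_fst, Finset.mem_insert]
  rintro (rfl | h1)
  · omega
  · exact this.1 h1

theorem early_merge {S : G.EState} {e f : Fin G.n} (hf : f ∉ S.1) (hef : T.ρ f < T.ρ e)
    (h : isD T S e) : isD T (st (insert f S.1) (col S)) e := by
  have aux : ∀ g, T.ρ f < T.ρ g → g ∉ S.1 → g ∉ (st (insert f S.1) (col S)).1 := by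
    intro g hg hgs
    rw [st_fst, Finset.mem_insert]
    rintro (rfl | h1)
    · omega
    · exact hgs h1
  refine ⟨⟨aux e hef h.1.1, fun hc => h.1.2 ((merge_col T hf h.1.1 hef).1 hc)⟩, fun g hg => ?_⟩
  have := h.2 g hg
  exact ⟨aux g (by omega) this.1, (merge_col T hf this.1 (by omega)).2 this.2⟩

/-- triangularity -/
theorem triang {S u : G.EState} {e f : Fin G.n} (hS : isD T S e) (hu : isU T u f)
    (h : G.dState S u ≠ 0) : f ∉ S.1 ∧ u = st (insert f S.1) (col S) ∧ T.ρ e ≤ T.ρ f := by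
  obtain ⟨g, hg, -, rfl⟩ := dState_ne h
  rcases lt_or_ge (T.ρ g) (T.ρ e) with h1 | h1
  · exact (not_U_D T hu (early_merge T hg h1 hS)).elim
  · have := U_unique T hu (later_merge T hg h1 hS.2)
    subst this
    exact ⟨hg, rfl, h1⟩

theorem col_down {S : G.EState} {f : Fin G.n} (hc : ¬ col S (T.child f)) (v : G.V) :
    col S v ↔ col (st (insert f S.1) (col S)) v ∧ ¬ eqv S.1 v (T.child f) := by
  rw [col_st]
  constructor
  · intro h; exact ⟨⟨v, rfl, h⟩, fun h' => hc ((col_congr h').1 h)⟩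
  · rintro ⟨⟨w, hw, cw⟩, hn⟩
    rcases (eqv_insert (T.ends_eq f)).1 hw with h1 | ⟨-, h1⟩ | ⟨h1, -⟩
    · exact (col_congr h1).1 cw
    · exact absurd h1 hn
    · exact absurd ((col_congr h1).1 cw) hc

theorem down_inj {S S' : G.EState} {f : Fin G.n} (hf : f ∉ S.1) (hf' : f ∉ S'.1)
    (hc : ¬ col S (T.child f)) (hc' : ¬ col S' (T.child f))
    (h : st (insert f S.1) (col S) = st (insert f S'.1) (col S')) : S = S' := by
  have h1 : insert f S.1 = insert f S'.1 := congrArg Sigma.fst h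
  have h2 : S.1 = S'.1 := by
    rw [← Finset.erase_insert hf, h1, Finset.erase_insert hf']
  refine estate_ext h2 fun v => ?_
  rw [col_down T hc, col_down T hc', h, h2]

theorem exists_down {u : G.EState} {f : Fin G.n} (hu : isU T u f) :
    ∃ S, isD T S f ∧ u = st (insert f S.1) (col S) := by
  set s := u.1.erase f with hs
  have hfs : f ∉ s := Finset.notMem_erase _ _
  have hsu : insert f s = u.1 := Finset.insert_erase hu.1
  have hsub : s ⊆ u.1 := Finset.erase_subset _ _
  let S : G.EState := st s fun v => col u v ∧ ¬ eqv s v (T.child f)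
  have hcol : ∀ v, col S v ↔ col u v ∧ ¬ eqv s v (T.child f) := by
    intro v
    rw [col_st]
    constructor
    · rintro ⟨w, hw, h1, h2⟩
      exact ⟨(col_congr (eqv_mono hsub hw)).1 h1, fun h => h2 (hw.trans h)⟩
    · intro h; exact ⟨v, rfl, h⟩
  have hun : ¬ col S (T.child f) := fun h => ((hcol _).1 h).2 rfl
  refine ⟨S, ⟨⟨hfs, hun⟩, fun g hg => ?_⟩, ?_⟩
  · have h1 := hu.2 g hg
    have h2 : g ∉ s := fun h => h1.1 (hsub h)
    exact ⟨h2, (hcol _).2 ⟨h1.2, not_child_child T hfs h2 (by rintro rfl; omega)⟩⟩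
  · refine estate_ext hsu.symm fun v => ?_
    rw [col_st]
    change _ ↔ ∃ w, eqv (insert f s) w v ∧ _
    constructor
    · intro h
      by_cases hv : eqv s v (T.child f)
      · have h3 : eqv (insert f s) (T.par f) v :=
          (eqv_insert (T.ends_eq f)).2 (Or.inr (Or.inl ⟨rfl, hv⟩))
        refine ⟨T.par f, h3, (hcol _).2 ⟨?_, fun h => not_par_child T hfs le_rfl h.symm⟩⟩
        rw [hsu] at h3
        exact (col_congr h3).2 h
      · exact ⟨v, rfl, (hcol _).2 ⟨h, hv⟩⟩
    · rintro ⟨w, hw, hc⟩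
      rw [hsu] at hw
      exact (col_congr hw).1 ((hcol _).1 hc).1

theorem grade_down {S : G.EState} {f : Fin G.n} (hS : isD T S f) {i j : ℕ}
    (hu : st (insert f S.1) (col S) ∈ G.grade (i+1) j) : S ∈ G.grade i j := by
  obtain ⟨h1, h2⟩ := hu
  rw [st_fst, Finset.card_insert_of_notMem hS.1.1] at h1
  rw [jdeg_st (Finset.subset_insert _ _) (good_of_uncol T hS.1.2)] at h2
  exact ⟨by omega, h2⟩

theorem inj_D {z : G.EState →₀ ℤ} (hz : ∀ S, z S ≠ 0 → ∃ e, isD T S e) (hd : G.diff z = 0) :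
    z = 0 := by
  by_contra hne
  have hex : ∃ m, ∃ S e, z S ≠ 0 ∧ isD T S e ∧ T.ρ e = m := by
    obtain ⟨S, hS⟩ := Finsupp.ne_iff.1 hne
    obtain ⟨e, he⟩ := hz S (by simpa using hS)
    exact ⟨_, S, e, by simpa using hS, he, rfl⟩
  classical
  obtain ⟨S, e, hzS, hS, hm⟩ := Nat.find_spec hex
  have hmin : ∀ S' e', z S' ≠ 0 → isD T S' e' → T.ρ e ≤ T.ρ e' := fun S' e' h1 h2 => by
    rw [hm]; exact Nat.find_min' hex ⟨S', e', h1, h2, rfl⟩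
  have hU := later_merge T hS.1.1 le_rfl hS.2
  have h0 : G.diff z (st (insert e S.1) (col S)) = 0 := by rw [hd]; rfl
  rw [diff_apply, Finsupp.sum, Finset.sum_eq_single S] at h0
  · rw [dState_apply hS.1.1 (good_of_uncol T hS.1.2)] at h0
    have := sgn_mul_self S.1 e
    rcases mul_eq_zero.1 h0 with h | h
    · exact hzS h
    · rw [h] at this; simp at this
  · intro S' hS' hne
    have hzS' : z S' ≠ 0 := by simpa using hS'
    obtain ⟨e', he'⟩ := hz S' hzS'
    by_contra hc
    obtain ⟨h1, h2, h3⟩ := triang T he' hU (right_ne_zero_of_mul hc)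
    have h4 : e' = e := ρ_inj T (le_antisymm h3 (hmin S' e' hzS' he'))
    subst h4
    exact hne (down_inj T h1 hS.1.1 he'.1.2 hS.1.2 h2.symm)
  · intro h; simp at h; exact absurd h hzS

def setU : Set G.EState := {S | ∃ e, isU T S e}
def setD : Set G.EState := {S | ∃ e, isD T S e}

noncomputable def Mmod (i j : ℕ) : Submodule ℤ (G.EState →₀ ℤ) :=
  Submodule.map G.diff (Finsupp.supported ℤ ℤ (G.grade i j ∩ setD T)) ⊔
    Finsupp.supported ℤ ℤ (G.grade (i+1) j ∩ (setU T)ᶜ)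

theorem single_mem_M (i j : ℕ) : ∀ k : ℕ, ∀ u ∈ G.grade (i+1) j,
    (∀ e, isU T u e → (Finset.univ.sup T.ρ) < T.ρ e + k) → Finsupp.single u 1 ∈ Mmod T i j := by
  intro k
  induction k with
  | zero =>
    intro u hu h
    refine Submodule.mem_sup_right (Finsupp.single_mem_supported ℤ _ ⟨hu, ?_⟩)
    rintro ⟨e, he⟩
    have h1 := h e he
    have h2 : T.ρ e ≤ _ := Finset.le_sup (f := T.ρ) (Finset.mem_univ e)
    omega
  | succ k ih =>
    intro u hu h
    by_cases hU : u ∈ setU T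
    swap
    · exact Submodule.mem_sup_right (Finsupp.single_mem_supported ℤ _ ⟨hu, hU⟩)
    obtain ⟨f, hf⟩ := hU
    obtain ⟨S, hS, hSu⟩ := exists_down T hf
    have hSg : S ∈ G.grade i j := grade_down T hS (hSu ▸ hu)
    have hd : G.dState S ∈ Mmod T i j := by
      refine Submodule.mem_sup_left ⟨Finsupp.single S 1, ?_, diff_single S⟩
      exact Finsupp.single_mem_supported ℤ _ ⟨hSg, f, hS⟩
    have hval : G.dState S u = sgn S.1 f := by
      rw [hSu]; exact dState_apply hS.1.1 (good_of_uncol T hS.1.2)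
    have hrest : G.dState S - Finsupp.single u (sgn S.1 f) ∈ Mmod T i j := by
      rw [← Finsupp.sum_single (G.dState S - Finsupp.single u (sgn S.1 f))]
      refine Submodule.sum_mem _ fun x hx => ?_
      have hx' := Finsupp.mem_support_iff.1 hx
      have hxu : x ≠ u := by
        rintro rfl
        simp [hval] at hx'
      rw [Finsupp.sub_apply, Finsupp.single_eq_of_ne hxu, sub_zero] at hx'
      rw [← mul_one ((G.dState S - Finsupp.single u (sgn S.1 f)) x), ← smul_eq_mul,
        ← Finsupp.smul_single]
      refine Submodule.smul_mem _ _ (ih x (dState_grade hSg hx') fun e he => ?_)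
      obtain ⟨h1, h2, h3⟩ := triang T hS he hx'
      have h4 : T.ρ f ≠ T.ρ e := by
        intro hh
        have := ρ_inj T hh
        subst this
        exact hxu (h2.trans hSu.symm)
      have := h f hf
      omega
    have h5 := Submodule.smul_mem _ (sgn S.1 f) (Submodule.sub_mem _ hd hrest)
    rwa [sub_sub_cancel, Finsupp.smul_single, smul_eq_mul, sgn_mul_self] at h5

theorem Cmod_le_M (i j : ℕ) : G.Cmod (i+1) j ≤ Mmod T i j := by
  intro z hz
  rw [← Finsupp.sum_single z]
  refine Submodule.sum_mem _ fun x hx => ?_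
  rw [← mul_one (z x), ← smul_eq_mul, ← Finsupp.smul_single]
  exact Submodule.smul_mem _ _ (single_mem_M T i j (Finset.univ.sup T.ρ + 1) x
    ((Finsupp.mem_supported ℤ _).1 hz hx) fun e _ => by omega)

/-- Main homological consequence. -/
theorem cocycle_bd {i j : ℕ} {z : G.EState →₀ ℤ} (hz : z ∈ G.Cmod (i+1) j) (hd : G.diff z = 0) :
    ∃ y ∈ Finsupp.supported ℤ ℤ (G.grade i j ∩ setD T), G.diff y = z := by
  obtain ⟨a, ⟨y, hy, rfl⟩, b, hb, rfl⟩ := Submodule.mem_sup.1 (Cmod_le_M T i j hz)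
  refine ⟨y, hy, ?_⟩
  have : b = 0 := by
    refine inj_D T (fun S hS => ?_) (by simpa [diff_diff] using hd)
    have h1 := (Finsupp.mem_supported ℤ _).1 hb (Finsupp.mem_support_iff.2 hS)
    rcases trichotomy T S with h | h | h
    · exact absurd h h1.2
    · exact h
    · have h2 : S.1.card = i + 1 := h1.1.1
      obtain ⟨g, hg⟩ := Finset.card_pos.1 (by omega : 0 < S.1.card)
      exact absurd hg (h g).1
  rw [this, add_zero]

theorem jdeg_crit_aux (P : G.V → Prop) :
    G.jdeg (st ∅ P) = Nat.card {v // P v} := by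
  unfold jdeg
  symm
  have hinj : ∀ v w, eqv (∅ : Finset (Fin G.n)) v w → v = w := fun v w h =>
    eqv_least (R := Eq) ⟨fun _ => rfl, Eq.symm, Eq.trans⟩ (by rintro _ _ ⟨e, he, -⟩; simp at he) h
  refine Nat.card_eq_of_bijective
    (fun v : {v // P v} => (⟨G.cmk ∅ v.1, v.1, rfl, v.2⟩ : {k // (st ∅ P).2 k})) ⟨?_, ?_⟩
  · intro v w h
    exact Subtype.ext (hinj _ _ (congrArg Subtype.val h))
  · rintro ⟨K, v, rfl, hv⟩
    exact ⟨⟨v, hv⟩, rfl⟩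

/-- The critical state: no edges, all non-root vertices colored. -/
def crit (p : Prop) : G.EState := st ∅ fun v => v = T.root → p

theorem crit_jdeg (hcard : Fintype.card G.V = G.n + 1) (p : Prop) [Decidable p] :
    G.jdeg (crit T p) = if p then G.n + 1 else G.n := by
  classical
  rw [crit, jdeg_crit_aux]
  split_ifs with hp
  · simp [hp, hcard]
  · simp only [hp, imp_false]
    rw [Nat.card_eq_fintype_card, Fintype.card_subtype_compl, hcard, Fintype.card_subtype_eq]
    omega

theorem eq_crit {S : G.EState} (h : ∀ g, g ∉ S.1 ∧ col S (T.child g)) :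
    S = crit T (col S T.root) := by
  have hs : S.1 = ∅ := Finset.eq_empty_of_forall_notMem fun g => (h g).1
  refine estate_ext hs fun v => ?_
  rw [crit, col_st]
  constructor
  · intro hc; exact ⟨v, rfl, fun hv => hv ▸ hc⟩
  · rintro ⟨w, hw, hc⟩
    rw [← hs] at hw
    refine (col_congr hw).1 ?_
    by_cases hr : w = T.root
    · rw [hr]; exact hc hr
    · obtain ⟨e, rfl⟩ := T.surj w hr
      exact (h e).2

theorem crit_grade (hcard : Fintype.card G.V = G.n + 1) (p : Prop) [Decidable p] :
    crit T p ∈ G.grade 0 (if p then G.n + 1 else G.n) :=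
  ⟨rfl, crit_jdeg T hcard p⟩

theorem crit_not_D (p : Prop) (e : Fin G.n) : ¬ isD T (crit T p) e := fun h =>
  h.1.2 ⟨T.child e, rfl, fun hr => absurd hr (T.ne_root e)⟩

theorem zero_grade {j : ℕ} {z : G.EState →₀ ℤ} (hz : z ∈ G.Zmod 0 j)
    (h : ∀ p, z (crit T p) = 0) : z = 0 := by
  refine inj_D T (fun S hS => ?_) hz.1
  have h1 := (Finsupp.mem_supported ℤ _).1 hz.2 (Finsupp.mem_support_iff.2 hS)
  rcases trichotomy T S with ⟨e, he⟩ | h2 | h2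
  · have : S.1 = ∅ := Finset.card_eq_zero.1 h1.1
    exact absurd he.1 (by simp [this])
  · exact h2
  · rw [eq_crit T h2] at hS
    exact absurd (h _) hS

theorem exists_cocycle (hcard : Fintype.card G.V = G.n + 1) (p : Prop) [Decidable p] :
    ∃ z ∈ G.Zmod 0 (if p then G.n + 1 else G.n), z (crit T p) = 1 := by
  have hc : Finsupp.single (crit T p) 1 ∈ G.Cmod 0 (if p then G.n + 1 else G.n) :=
    Finsupp.single_mem_supported ℤ _ (crit_grade T hcard p)
  obtain ⟨y, hy, hyd⟩ := cocycle_bd T (diff_Cmod hc) (diff_diff _)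
  refine ⟨Finsupp.single (crit T p) 1 - y, ⟨?_, ?_⟩, ?_⟩
  · change G.diff _ = 0
    rw [map_sub, hyd, sub_self]
  · exact Submodule.sub_mem _ hc (Finsupp.supported_mono Set.inter_subset_left hy)
  · have : y (crit T p) = 0 := by
      by_contra hne
      obtain ⟨e, he⟩ := ((Finsupp.mem_supported ℤ _).1 hy (Finsupp.mem_support_iff.2 hne)).2
      exact crit_not_D T p e he
    simp [this]

theorem sub_of_le {i j : ℕ} (h : G.Zmod i j ≤ G.Bmod i j) : Subsingleton (G.Hmod i j) := by
  unfold Hmod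
  rw [QuotientAddGroup.subsingleton_iff]
  rw [eq_top_iff]
  rintro ⟨z, hz⟩ -
  exact h hz

theorem H0_equiv (T : Rooting G) (hcard : Fintype.card G.V = G.n + 1) (p : Prop) [Decidable p] :
    Nonempty (G.Hmod 0 (if p then G.n + 1 else G.n) ≃+ ℤ) := by
  set j := if p then G.n + 1 else G.n with hj
  let φ : (G.Zmod 0 j).toAddSubgroup →+ ℤ :=
    (Finsupp.applyAddHom (crit T p)).comp (G.Zmod 0 j).toAddSubgroup.subtype
  have hφ : ∀ z, φ z = z.1 (crit T p) := fun z => rfl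
  have hsurj : Function.Surjective φ := by
    obtain ⟨z, hz, h1⟩ := exists_cocycle T hcard p
    intro m
    refine ⟨m • ⟨z, hz⟩, ?_⟩
    rw [map_zsmul, hφ, h1]; simp
  have hker : AddSubgroup.comap (G.Zmod 0 j).toAddSubgroup.subtype (G.Bmod 0 j).toAddSubgroup
      = φ.ker := by
    ext ⟨z, hz⟩
    rw [AddSubgroup.mem_comap, AddMonoidHom.mem_ker, hφ]
    change z ∈ (⊥ : Submodule ℤ _) ↔ z (crit T p) = 0
    rw [Submodule.mem_bot]
    constructor
    · rintro rfl; rfl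
    · intro h
      refine zero_grade T hz fun q => ?_
      by_contra hne
      have h2 := ((Finsupp.mem_supported ℤ _).1 hz.2 (Finsupp.mem_support_iff.2 hne)).2
      classical
      rw [crit_jdeg T hcard q, hj] at h2
      have hqp : q = p := by
        apply propext
        split_ifs at h2 <;> first | tauto | omega
      rw [hqp] at hne
      exact hne h
  exact ⟨(QuotientAddGroup.quotientAddEquivOfEq hker).trans
    (QuotientAddGroup.quotientKerEquivOfSurjective φ hsurj)⟩

end tree
end OGraph

/-- for a tree `T_n` with `n` edges (a connected graph with
`n + 1` vertices and `n` edges), `H^0(T_n) ≅ ℤ{n} ⊕ ℤ{n+1}` and `H^i(T_n) = 0`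
for `i ≠ 0`: the degree-`n` and degree-`(n+1)` parts of `H^0` are each `ℤ`, all
other bigraded pieces vanish. -/
theorem cohomology_tree (G : OGraph) (hcard : Fintype.card G.V = G.n + 1)
    (hconn : Subsingleton (G.Comp Finset.univ)) :
    Nonempty (G.Hmod 0 G.n ≃+ ℤ) ∧
    Nonempty (G.Hmod 0 (G.n + 1) ≃+ ℤ) ∧
    (∀ j : ℕ, j ≠ G.n → j ≠ G.n + 1 → Subsingleton (G.Hmod 0 j)) ∧
    (∀ i : ℕ, i ≠ 0 → ∀ j : ℕ, Subsingleton (G.Hmod i j)) := by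
  obtain ⟨T⟩ := OGraph.exists_rooting G hcard hconn
  refine ⟨?_, ?_, ?_, ?_⟩
  · simpa using OGraph.H0_equiv T hcard False
  · simpa using OGraph.H0_equiv T hcard True
  · intro j h1 h2
    refine OGraph.sub_of_le fun z hz => ?_
    have : z = 0 := by
      refine OGraph.zero_grade T hz fun q => ?_
      by_contra hne
      have h3 := ((Finsupp.mem_supported ℤ _).1 hz.2 (Finsupp.mem_support_iff.2 hne)).2
      classical
      rw [OGraph.crit_jdeg T hcard q] at h3
      split_ifs at h3 <;> omega
    rw [this]; exact Submodule.zero_mem _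
  · intro i hi j
    obtain ⟨i, rfl⟩ := Nat.exists_eq_succ_of_ne_zero hi
    refine OGraph.sub_of_le fun z hz => ?_
    obtain ⟨y, hy, hyz⟩ := OGraph.cocycle_bd T hz.2 hz.1
    exact ⟨y, Finsupp.supported_mono Set.inter_subset_left hy, hyz⟩
end

section
/- For the cycle graph P_n with n ≥ 2 edges: H^0(P_n) ≅ ℤ{n} ⊕ ℤ{n−1} if n is even and ℤ{n} if n is odd; and for i > 0, H^i(P_n) ≅ ℤ₂{n−i} ⊕ ℤ{n−i−1} if n−i ≥ 2 is even, ℤ{n−i} if n−i ≥ 2 is odd, and 0 if n−i ≤ 1. In particular H^*(P_n) contains 2-torsion for all n ≥ 3. -/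
/-- The cycle (circuit/polygon) graph `P_n` with vertices `0, …, n−1 ∈ Fin n` and
`n` edges, the `k`-th edge joining `k` to `k + 1 (mod n)`. -/
def cycleGraph (n : ℕ) (hn : 0 < n) : OGraph :=
  ⟨Fin n, n, fun k => s(k, ⟨(k.val + 1) % n, Nat.mod_lt _ hn⟩)⟩


namespace Cyc

def BM : ℕ → Type
  | 0 => Bool
  | k + 1 => BM k ⊕ (BM k ⊕ BM k)

def BC : ℕ → Type
  | 0 => Bool
  | n + 1 => BM n ⊕ BC n

abbrev M (k : ℕ) := BM k → ℤ
abbrev C (n : ℕ) := BC n → ℤ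

def tri {k : ℕ} (p q r : M k) : M (k + 1) := Sum.elim p (Sum.elim q r)
def duo {n : ℕ} (p : M n) (q : C n) : C (n + 1) := Sum.elim p q

def pE {k : ℕ} : M (k + 1) →ₗ[ℤ] M k := LinearMap.funLeft ℤ ℤ (fun b => (Sum.inl b : BM k ⊕ (BM k ⊕ BM k)))
def p1 {k : ℕ} : M (k + 1) →ₗ[ℤ] M k := LinearMap.funLeft ℤ ℤ (fun b => (Sum.inr (Sum.inl b) : BM k ⊕ (BM k ⊕ BM k)))
def pX {k : ℕ} : M (k + 1) →ₗ[ℤ] M k := LinearMap.funLeft ℤ ℤ (fun b => (Sum.inr (Sum.inr b) : BM k ⊕ (BM k ⊕ BM k)))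
def qM {k : ℕ} : C (k + 1) →ₗ[ℤ] M k := LinearMap.funLeft ℤ ℤ (fun b => (Sum.inl b : BM k ⊕ BC k))
def qC {k : ℕ} : C (k + 1) →ₗ[ℤ] C k := LinearMap.funLeft ℤ ℤ (fun b => (Sum.inr b : BM k ⊕ BC k))

section basic
variable {k : ℕ} (p q r p' q' r' : M k) (c c' : C k)
@[simp] theorem pE_tri : pE (tri p q r) = p := rfl
@[simp] theorem p1_tri : p1 (tri p q r) = q := rfl
@[simp] theorem pX_tri : pX (tri p q r) = r := rfl
@[simp] theorem qM_duo : qM (duo p c) = p := rfl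
@[simp] theorem qC_duo : qC (duo p c) = c := rfl
theorem tri_eta (f : M (k + 1)) : tri (pE f) (p1 f) (pX f) = f := by
  funext b; rcases b with b | b | b <;> rfl
theorem duo_eta (f : C (k + 1)) : duo (qM f) (qC f) = f := by
  funext b; rcases b with b | b <;> rfl
theorem tri_add : tri p q r + tri p' q' r' = tri (p + p') (q + q') (r + r') := by
  funext b; rcases b with b | b | b <;> rfl
theorem duo_add : duo p c + duo p' c' = duo (p + p') (c + c') := by
  funext b; rcases b with b | b <;> rfl
theorem tri_smul (t : ℤ) : t • tri p q r = tri (t • p) (t • q) (t • r) := by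
  funext b; rcases b with b | b | b <;> rfl
theorem duo_smul (t : ℤ) : t • duo p c = duo (t • p) (t • c) := by
  funext b; rcases b with b | b <;> rfl
@[simp] theorem tri_zero : tri (0 : M k) 0 0 = 0 := by
  funext b; rcases b with b | b | b <;> rfl
@[simp] theorem duo_zero : duo (0 : M k) 0 = 0 := by
  funext b; rcases b with b | b <;> rfl
theorem tri_inj : tri p q r = tri p' q' r' ↔ p = p' ∧ q = q' ∧ r = r' := by
  constructor
  · intro h
    exact ⟨congrArg pE h, congrArg p1 h, congrArg pX h⟩
  · rintro ⟨rfl, rfl, rfl⟩; rfl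
theorem duo_inj : duo p c = duo p' c' ↔ p = p' ∧ c = c' := by
  constructor
  · intro h
    exact ⟨congrArg qM h, congrArg qC h⟩
  · rintro ⟨rfl, rfl⟩; rfl
end basic

def triL {k : ℕ} {N : Type} [AddCommGroup N] (a b c : N →ₗ[ℤ] M k) : N →ₗ[ℤ] M (k + 1) where
  toFun f := tri (a f) (b f) (c f)
  map_add' := by intro f g; simp [tri_add]
  map_smul' := by intro f g; simp only [map_smul, tri_smul, RingHom.id_apply]

def duoL {k : ℕ} {N : Type} [AddCommGroup N] (a : N →ₗ[ℤ] M k) (b : N →ₗ[ℤ] C k) :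
    N →ₗ[ℤ] C (k + 1) where
  toFun f := duo (a f) (b f)
  map_add' := by intro f g; simp [duo_add]
  map_smul' := by intro f g; simp only [map_smul, duo_smul, RingHom.id_apply]

def X0 : (Bool → ℤ) →ₗ[ℤ] (Bool → ℤ) where
  toFun f := fun b => bif b then f false else 0
  map_add' := by intro f g; funext b; cases b <;> simp
  map_smul' := by intro f g; funext b; cases b <;> simp

noncomputable def X : (k : ℕ) → M k →ₗ[ℤ] M k
  | 0 => X0
  | k + 1 => triL (X k ∘ₗ pE) 0 p1
noncomputable def Y : (k : ℕ) → M k →ₗ[ℤ] M k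
  | 0 => X0
  | k + 1 => triL (Y k ∘ₗ pE) (Y k ∘ₗ p1) (Y k ∘ₗ pX)
noncomputable def dM : (k : ℕ) → M k →ₗ[ℤ] M k
  | 0 => 0
  | k + 1 => triL (p1 + X k ∘ₗ pX - dM k ∘ₗ pE) (dM k ∘ₗ p1) (dM k ∘ₗ pX)
noncomputable def phi : (k : ℕ) → M k →ₗ[ℤ] C k
  | 0 => LinearMap.id (M := Bool → ℤ)
  | k + 1 => duoL (p1 + Y k ∘ₗ pX) (phi k ∘ₗ pE)
noncomputable def dC : (k : ℕ) → C k →ₗ[ℤ] C k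
  | 0 => 0
  | k + 1 => duoL (dM k ∘ₗ qM) (phi k ∘ₗ qM - dC k ∘ₗ qC)
noncomputable def g : (k : ℕ) → (Bool → ℤ) →ₗ[ℤ] M k
  | 0 => LinearMap.id (M := Bool → ℤ)
  | k + 1 => triL 0 (- (X k ∘ₗ g k)) (g k)

section rec
variable {k : ℕ} (p q r : M k) (c : C k)
@[simp] theorem X_tri : X (k+1) (tri p q r) = tri (X k p) 0 q := rfl
@[simp] theorem Y_tri : Y (k+1) (tri p q r) = tri (Y k p) (Y k q) (Y k r) := rfl
@[simp] theorem dM_tri : dM (k+1) (tri p q r) = tri (q + X k r - dM k p) (dM k q) (dM k r) := rfl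
@[simp] theorem phi_tri : phi (k+1) (tri p q r) = duo (q + Y k r) (phi k p) := rfl
@[simp] theorem dC_duo : dC (k+1) (duo p c) = duo (dM k p) (phi k p - dC k c) := rfl
@[simp] theorem g_succ (a) : g (k+1) a = tri 0 (- X k (g k a)) (g k a) := rfl
@[simp] theorem g_zero (a) : g 0 a = a := rfl
end rec

theorem X0_X0 (a) : X0 (X0 a) = 0 := by funext b; cases b <;> rfl

theorem X_X : ∀ {k : ℕ} (f : M k), X k (X k f) = 0
  | 0, f => X0_X0 f
  | k + 1, f => by rw [← tri_eta f]; simp [X_X]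
theorem Y_Y : ∀ {k : ℕ} (f : M k), Y k (Y k f) = 0
  | 0, f => X0_X0 f
  | k + 1, f => by rw [← tri_eta f]; simp [Y_Y]
theorem dM_X : ∀ {k : ℕ} (f : M k), dM k (X k f) = X k (dM k f)
  | 0, f => by simp [dM]
  | k + 1, f => by rw [← tri_eta f]; simp [dM_X, X_X]
theorem X_Y : ∀ {k : ℕ} (f : M k), Y k (X k f) = X k (Y k f)
  | 0, f => rfl
  | k + 1, f => by rw [← tri_eta f]; simp [X_Y]
theorem dM_Y : ∀ {k : ℕ} (f : M k), dM k (Y k f) = Y k (dM k f)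
  | 0, f => by simp [dM]
  | k + 1, f => by rw [← tri_eta f]; simp [dM_Y, X_Y]
theorem phi_X : ∀ {k : ℕ} (f : M k), phi k (X k f) = phi k (Y k f)
  | 0, f => rfl
  | k + 1, f => by rw [← tri_eta f]; simp [phi_X, Y_Y]
theorem dC_phi : ∀ {k : ℕ} (f : M k), dC k (phi k f) = phi k (dM k f)
  | 0, f => by simp [dM, dC]
  | k + 1, f => by rw [← tri_eta f]; simp [dC_phi, phi_X, dM_Y]
theorem X_g : ∀ {k : ℕ} (a), X k (g k a) = (-1 : ℤ) ^ k • g k (X0 a)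
  | 0, f => by rw [pow_zero, one_smul]; rfl
  | k + 1, f => by
    have h := X_g (k := k) f
    have h2 := X_g (k := k) (X0 f)
    rw [X0_X0] at h2
    rw [g_succ, g_succ, X_tri, tri_smul, h2, h, pow_succ, mul_neg_one, tri_inj]
    simp [-zsmul_eq_mul, neg_smul]
theorem Y_g : ∀ {k : ℕ} (a), Y k (g k a) = g k (X0 a)
  | 0, f => rfl
  | k + 1, f => by simp [Y_g, X_Y]
theorem dM_g : ∀ {k : ℕ} (a), dM k (g k a) = 0
  | 0, f => rfl
  | k + 1, f => by simp [dM_g, dM_X]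
theorem g_bd : ∀ {k : ℕ} (a) (h : M k), g k a = dM k h → a = 0
  | 0, a, h, e => e
  | k + 1, a, h, e => by
    rw [← tri_eta h] at e
    simp [tri_inj] at e
    exact g_bd a _ e.2.2

/-- the generator map -/
noncomputable def ga (k : ℕ) : (Bool → ℤ) →ₗ[ℤ] C (k + 1) := duoL (g k) 0
theorem ga_def (k a) : ga k a = duo (g k a) 0 := rfl

theorem phi_g {k : ℕ} (a) : phi (k+1) (g (k+1) a) = ga k ((1 - (-1 : ℤ) ^ k) • X0 a) := by
  rw [ga_def, g_succ, phi_tri, duo_inj, X_g, Y_g, map_smul, sub_smul, one_smul]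
  exact ⟨by abel, map_zero _⟩

/-! grading -/
def degM : (k : ℕ) → BM k → ℤ × ℤ
  | 0 => fun (b : Bool) => (0, bif b then 1 else 0)
  | k + 1 => Sum.elim (fun b => ((degM k b).1 + 1, (degM k b).2))
      (Sum.elim (degM k) (fun b => ((degM k b).1, (degM k b).2 + 1)))
def degC : (k : ℕ) → BC k → ℤ × ℤ
  | 0 => fun (b : Bool) => (0, bif b then 1 else 0)
  | k + 1 => Sum.elim (fun b => ((degM k b).1, (degM k b).2))
      (fun b => ((degC k b).1 + 1, (degC k b).2))
/-- correction: first component of `C (k+1)` carries a terminal letter -/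
def hM (k : ℕ) (i j : ℤ) (f : M k) : Prop := ∀ b, f b ≠ 0 → degM k b = (i, j)
def hC (k : ℕ) (i j : ℤ) (f : C k) : Prop := ∀ b, f b ≠ 0 → degC k b = (i, j)

theorem hM_tri {k i j} (p q r : M k) :
    hM (k+1) i j (tri p q r) ↔ hM k (i-1) j p ∧ hM k i j q ∧ hM k i (j-1) r := by
  constructor
  · intro h
    refine ⟨fun b hb => ?_, fun b hb => ?_, fun b hb => ?_⟩
    · have := h (Sum.inl b) hb
      simp [degM, Prod.ext_iff] at this ⊢; omega
    · have := h (Sum.inr (Sum.inl b)) hb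
      simp [degM, Prod.ext_iff] at this ⊢; omega
    · have := h (Sum.inr (Sum.inr b)) hb
      simp [degM, Prod.ext_iff] at this ⊢; omega
  · rintro ⟨h1, h2, h3⟩ (b | b | b) hb
    · have := h1 b hb
      simp [degM, Prod.ext_iff] at this ⊢; omega
    · have := h2 b hb
      simp [degM, Prod.ext_iff] at this ⊢; omega
    · have := h3 b hb
      simp [degM, Prod.ext_iff] at this ⊢; omega

theorem hC_duo {k i j} (p : M k) (q : C k) :
    hC (k+1) i j (duo p q) ↔ hM k i j p ∧ hC k (i-1) j q := by
  constructor
  · intro h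
    refine ⟨fun b hb => ?_, fun b hb => ?_⟩
    · have := h (Sum.inl b) hb
      simp [degC, Prod.ext_iff] at this ⊢; omega
    · have := h (Sum.inr b) hb
      simp [degC, Prod.ext_iff] at this ⊢; omega
  · rintro ⟨h1, h2⟩ (b | b) hb
    · have := h1 b hb
      simp [degC, Prod.ext_iff] at this ⊢; omega
    · have := h2 b hb
      simp [degC, Prod.ext_iff] at this ⊢; omega

theorem hM_zero {k i j} : hM k i j 0 := fun b hb => absurd rfl hb
theorem hC_zero {k i j} : hC k i j 0 := fun b hb => absurd rfl hb
theorem hM_add {k i j} {f f' : M k} (h : hM k i j f) (h' : hM k i j f') : hM k i j (f + f') := by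
  intro b hb
  by_cases h0 : f b = 0
  · exact h' b (by simpa [h0] using hb)
  · exact h b h0
theorem hM_smul {k i j} {f : M k} (t : ℤ) (h : hM k i j f) : hM k i j (t • f) := by
  intro b hb
  exact h b (by intro h0; simp [h0] at hb)
theorem hC_add {k i j} {f f' : C k} (h : hC k i j f) (h' : hC k i j f') : hC k i j (f + f') := by
  intro b hb
  by_cases h0 : f b = 0
  · exact h' b (by simpa [h0] using hb)
  · exact h b h0
theorem hC_smul {k i j} {f : C k} (t : ℤ) (h : hC k i j f) : hC k i j (t • f) := by
  intro b hb
  exact h b (by intro h0; simp [h0] at hb)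
theorem hM_neg {k i j} {f : M k} (h : hM k i j f) : hM k i j (-f) := by
  simpa using hM_smul (-1) h
theorem hC_neg {k i j} {f : C k} (h : hC k i j f) : hC k i j (-f) := by
  simpa using hC_smul (-1) h
theorem hM_sub {k i j} {f f' : M k} (h : hM k i j f) (h' : hM k i j f') : hM k i j (f - f') := by
  rw [sub_eq_add_neg]; exact hM_add h (hM_neg h')
theorem hC_sub {k i j} {f f' : C k} (h : hC k i j f) (h' : hC k i j f') : hC k i j (f - f') := by
  rw [sub_eq_add_neg]; exact hC_add h (hC_neg h')

theorem hM_X0 {i j} {f : M 0} (h : hM 0 i j f) : hM 0 i (j+1) (X0 f) := by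
  intro b hb
  rcases b with _ | _
  · simp [X0] at hb
  · have := h false hb
    simp [degM, Prod.ext_iff] at this ⊢; omega
theorem hM_X : ∀ {k : ℕ} {i j} {f : M k}, hM k i j f → hM k i (j+1) (X k f)
  | 0, _, _, _, h => hM_X0 h
  | k + 1, i, j, f, h => by
    rw [← tri_eta f] at h ⊢
    rw [hM_tri] at h
    rw [X_tri, hM_tri]
    exact ⟨hM_X h.1, hM_zero, by simpa using h.2.1⟩
theorem hM_Y : ∀ {k : ℕ} {i j} {f : M k}, hM k i j f → hM k i (j+1) (Y k f)
  | 0, _, _, _, h => hM_X0 h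
  | k + 1, i, j, f, h => by
    rw [← tri_eta f] at h ⊢
    rw [hM_tri] at h
    rw [Y_tri, hM_tri]
    exact ⟨hM_Y h.1, hM_Y h.2.1, by simpa using hM_Y h.2.2⟩
theorem hC_phi : ∀ {k : ℕ} {i j} {f : M k}, hM k i j f → hC k i j (phi k f)
  | 0, _, _, _, h => h
  | k + 1, i, j, f, h => by
    rw [← tri_eta f] at h ⊢
    rw [hM_tri] at h
    rw [phi_tri, hC_duo]
    exact ⟨hM_add h.2.1 (by simpa using hM_Y h.2.2), hC_phi h.1⟩

/-- homogeneity of coefficient vector -/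
def hA (m : ℕ) (j : ℤ) (a : Bool → ℤ) : Prop :=
  (a false ≠ 0 → j = m) ∧ (a true ≠ 0 → j = m + 1)

theorem hM_g : ∀ {k : ℕ} {j} {a}, hA k j a → hM k 0 j (g k a)
  | 0, j, a, h => by
    rintro (_ | _) hb
    · have := h.1 hb; simp [degM, this]
    · have := h.2 hb; simp [degM, this]
  | k + 1, j, a, h => by
    have : hA k (j-1) a := ⟨fun h' => by have := h.1 h'; push_cast at this; omega,
      fun h' => by have := h.2 h'; push_cast at this; omega⟩
    have := hM_g this
    rw [g_succ, hM_tri]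
    exact ⟨hM_zero, hM_neg (by simpa using hM_X this), this⟩

theorem path_surj : ∀ {k : ℕ} {i j} (z : M k), hM k i j z → dM k z = 0 →
    ∃ a h, hM k (i-1) j h ∧ z = dM k h + g k a ∧ hA k j a ∧ (a ≠ 0 → i = 0)
  | 0, i, j, z, hz, _ => by
    refine ⟨z, 0, hM_zero, (zero_add _).symm, ⟨fun h => ?_, fun h => ?_⟩, fun h => ?_⟩
    · have := hz false h; simp [degM] at this; simp [← this.2]
    · have := hz true h; simp [degM] at this; simp [← this.2]
    · obtain ⟨b, hb⟩ := Function.ne_iff.1 h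
      have := hz b hb; simp [degM] at this; exact this.1.symm
  | k + 1, i, j, z, hz, dz => by
    rw [← tri_eta z] at hz dz ⊢
    generalize pE z = p at *
    generalize p1 z = q at *
    generalize pX z = r at *
    rw [hM_tri] at hz
    rw [dM_tri, ← tri_zero, tri_inj] at dz
    obtain ⟨h1, h2, h3⟩ := hz
    obtain ⟨e1, e2, e3⟩ := dz
    obtain ⟨a, h, hh, rfl, ha, hi⟩ := path_surj r h3 e3
    refine ⟨a, tri 0 (p - X k h) h, ?_, ?_, ?_, hi⟩
    · rw [hM_tri]
      exact ⟨hM_zero, hM_sub h1 (by simpa using hM_X hh), hh⟩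
    · rw [dM_tri, g_succ, tri_add, tri_inj]
      refine ⟨by simp, ?_, rfl⟩
      rw [map_sub, dM_X]
      rw [map_add] at e1
      have : q = dM k p - X k (dM k h) - X k (g k a) := by
        rw [← sub_eq_zero, ← e1]; abel
      rw [this]; abel
    · refine ⟨fun h' => ?_, fun h' => ?_⟩
      · have := ha.1 h'; push_cast; omega
      · have := ha.2 h'; push_cast; omega

/-- `Ga r k a`: the generator in `C (k+1+r)` sitting in cohomological degree `r`. -/
noncomputable def Ga (k : ℕ) : (r : ℕ) → (Bool → ℤ) →ₗ[ℤ] C (k + 1 + r)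
  | 0 => ga k
  | r + 1 => duoL 0 (Ga k r)
@[simp] theorem Ga_succ (k r a) : Ga k (r+1) a = duo 0 (Ga k r a) := rfl
@[simp] theorem Ga_zero (k a) : Ga k 0 a = duo (g k a) 0 := rfl

theorem hC_Ga {k j a} : ∀ {r : ℕ}, hA k j a → hC (k+1+r) r j (Ga k r a)
  | 0, h => by
    rw [Ga_zero]
    exact (hC_duo _ _).2 ⟨hM_g h, hC_zero⟩
  | r + 1, h => by
    rw [Ga_succ]
    refine (hC_duo _ _).2 ⟨hM_zero, by simpa using hC_Ga h⟩

theorem hC_neg_deg {k : ℕ} {i j} {f : C k} (hi : i < 0) (h : hC k i j f) : f = 0 := by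
  have hm : ∀ k (b : BM k), 0 ≤ (degM k b).1 := by
    intro k
    induction k with
    | zero => intro b; simp [degM]
    | succ k ih =>
      rintro (b | b | b) <;> simp [degM] <;> have := ih b <;> omega
  have hc : ∀ k (b : BC k), 0 ≤ (degC k b).1 := by
    intro k
    induction k with
    | zero => intro b; simp [degC]
    | succ k ih =>
      rintro (b | b)
      · simpa [degC] using hm k b
      · simp [degC]; have := ih b; omega
  funext b
  by_contra hb
  have h1 := h b hb
  have h2 := hc k b
  rw [h1] at h2
  simp at h2; omega

/-- the cocycle condition for the coefficient. -/
def cond (k : ℕ) (a : Bool → ℤ) : Prop := ∃ k', k = k' + 1 ∧ (1 - (-1 : ℤ) ^ k') • X0 a = 0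

theorem dC_Ga_zero {k a} (h : cond k a) : dC (k+1) (Ga k 0 a) = 0 := by
  obtain ⟨k', rfl, h⟩ := h
  rw [Ga_zero, dC_duo, dM_g, phi_g, h]; simp
theorem dC_Ga {k a} (h : cond k a) : ∀ r, dC (k+1+r) (Ga k r a) = 0
  | 0 => dC_Ga_zero h
  | r + 1 => by
    have := dC_Ga h r
    rw [Ga_succ]
    refine (dC_duo (k := k+1+r) _ _).trans ?_
    rw [this]; simp

theorem cyc_surj : ∀ (n : ℕ) {i j : ℤ} (z : C (n+1)), hC (n+1) i j z → dC (n+1) z = 0 →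
    (∃ h, hC (n+1) (i-1) j h ∧ z = dC (n+1) h) ∨
    ∃ (k r : ℕ) (e : n = k + r) (a : Bool → ℤ), i = r ∧ hA k j a ∧ cond k a ∧
      ∃ h : C (k+1+r), hC (k+1+r) (i-1) j h ∧
        z = (show k + 1 + r = n + 1 by omega) ▸ (dC _ h + Ga k r a)
  | 0, i, j, z, hz, dz => by
    left
    rw [← duo_eta z] at hz dz ⊢
    generalize qM z = p at *
    generalize qC z = q at *
    rw [hC_duo] at hz
    rw [dC_duo, ← duo_zero, duo_inj] at dz
    have : p = 0 := (sub_zero (G := Bool → ℤ) p).symm.trans dz.2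
    subst this
    obtain ⟨q', hq'⟩ : ∃ q' : M 0, q' = q := ⟨q, rfl⟩
    refine ⟨duo q' 0, (hC_duo _ _).2 ⟨?_, hC_zero⟩, ?_⟩
    · rw [hq']; exact hz.2
    · rw [dC_duo, duo_inj]
      refine ⟨rfl, ?_⟩
      rw [map_zero, sub_zero]
      exact hq'.symm
  | n + 1, i, j, z, hz, dz => by
    rw [← duo_eta z] at hz dz ⊢
    generalize qM z = p at *
    generalize qC z = q at *
    rw [hC_duo] at hz
    rw [dC_duo, ← duo_zero, duo_inj] at dz
    obtain ⟨h1, h2⟩ := hz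
    obtain ⟨e1, e2⟩ := dz
    obtain ⟨a, u, hu, rfl, ha, hi⟩ := path_surj p h1 e1
    rw [map_add, phi_g, ← dC_phi] at e2
    have e3 : ga n ((1 - (-1 : ℤ) ^ n) • X0 a) = dC (n+1) (q - phi _ u) := by
      rw [map_sub, ← sub_eq_zero, ← e2]; abel
    have e4 : (1 - (-1 : ℤ) ^ n) • X0 a = 0 := by
      rw [← duo_eta (q - phi _ u), ga_def, dC_duo, duo_inj] at e3
      exact g_bd _ _ e3.1
    rw [e4, map_zero] at e3
    by_cases hi0 : a = 0
    · subst hi0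
      have h3 : hC (n+1) (i-1) j (q - phi _ u) := hC_sub h2 (hC_phi hu)
      rcases cyc_surj n _ h3 e3.symm with ⟨h, hh, e⟩ | ⟨k, r, rfl, b, hi', hb, cb, h, hh, e⟩
      · left
        refine ⟨duo u (-h), ?_, ?_⟩
        · rw [hC_duo]; exact ⟨hu, hC_neg hh⟩
        · rw [dC_duo, duo_inj]
          refine ⟨by simp, ?_⟩
          rw [map_neg, ← e]; abel
      · right
        refine ⟨k, r + 1, by omega, b, by push_cast; omega, hb, cb, ?_⟩
        have key : ∀ (N : ℕ) (eN : k + 1 + r = N) (u : M N) (hu : hM N (i-1) j u) (q : C N),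
          q - phi _ u = eN ▸ (dC _ h + Ga k r b) →
          ∃ h : C (k+1+(r+1)), hC (k+1+(r+1)) (i-1) j h ∧
            duo (dM N u + g N 0) q = (show k + 1 + (r + 1) = N + 1 by omega) ▸ (dC _ h + Ga k (r+1) b) := by
          rintro N rfl u hu q e
          refine ⟨duo (n := k+1+r) u (-h), (hC_duo _ _).2 ⟨hu, hC_neg hh⟩, ?_⟩
          change duo _ _ = dC (k+1+r+1) (duo u (-h)) + Ga k (r+1) b
          rw [dC_duo, Ga_succ]
          refine Eq.trans ?_ (duo_add (k := k+1+r) _ _ _ _).symm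
          rw [duo_inj]
          refine ⟨by simp, ?_⟩
          simp only at e
          rw [map_neg, sub_neg_eq_add]
          exact (sub_eq_iff_eq_add'.1 e).trans (add_assoc _ _ _).symm
        exact key (k + r + 1) (by omega) u hu q e
    · have hi := hi hi0
      subst hi
      right
      refine ⟨n + 1, 0, rfl, a, rfl, ha, ⟨n, rfl, e4⟩, duo u 0, (hC_duo _ _).2 ⟨hu, hC_zero⟩, ?_⟩
      have hq : q = 0 := hC_neg_deg (by simp) h2
      have hu' : phi _ u = 0 := hC_neg_deg (by simp) (hC_phi hu)
      change duo _ _ = dC (n+1+1) (duo u 0) + Ga (n+1) 0 a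
      rw [dC_duo, Ga_zero, duo_add, duo_inj]
      refine ⟨rfl, by simp [hq, hu']⟩

theorem cyc_inj0 {k a} (h) (e : Ga k 0 a = dC (k+1) h) : a = 0 := by
  rw [← duo_eta h, Ga_zero, dC_duo, duo_inj] at e
  exact g_bd _ _ e.1

theorem dM_tot_surj : ∀ {k : ℕ} (z : M k), dM k z = 0 → ∃ a h, z = dM k h + g k a
  | 0, z, _ => ⟨z, 0, (zero_add _).symm⟩
  | k + 1, z, dz => by
    rw [← tri_eta z] at dz ⊢
    generalize pE z = p at *
    generalize p1 z = q at *
    generalize pX z = r at *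
    rw [dM_tri, ← tri_zero, tri_inj] at dz
    obtain ⟨e1, e2, e3⟩ := dz
    obtain ⟨a, h, rfl⟩ := dM_tot_surj r e3
    refine ⟨a, tri 0 (p - X k h) h, ?_⟩
    rw [dM_tri, g_succ, tri_add, tri_inj]
    refine ⟨by simp, ?_, rfl⟩
    rw [map_sub, dM_X]
    rw [map_add] at e1
    have : q = dM k p - X k (dM k h) - X k (g k a) := by
      rw [← sub_eq_zero, ← e1]; abel
    rw [this]; abel

theorem cyc_inj1 {k a} : ∀ (r : ℕ) (h), Ga k (r+1) a = dC (k+1+(r+1)) h →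
    ∃ b, a = (1 - (-1 : ℤ) ^ k) • X0 b
  | 0, h, e => by
    rw [← duo_eta (k := k + 1) h, Ga_succ] at e
    have e := (duo_inj (k := k+1) _ _ _ _).1 (e.trans (dC_duo (k := k+1) _ _))
    obtain ⟨b, v, hv⟩ := dM_tot_surj (k := k+1) _ e.1.symm
    have e2 := e.2
    rw [hv, map_add, phi_g, ← dC_phi] at e2
    refine ⟨b, ?_⟩
    rw [← sub_eq_zero]
    apply cyc_inj0 (k := k) (phi (k+1) v - qC (k := k+1) h)
    change ga k _ = _
    change ga k a = _ at e2
    rw [map_sub, map_sub, e2]; abel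
  | r + 1, h, e => by
    rw [← duo_eta (k := k + 1 + (r+1)) h, Ga_succ] at e
    have e := (duo_inj (k := k+1+(r+1)) _ _ _ _).1 (e.trans (dC_duo (k := k+1+(r+1)) _ _))
    obtain ⟨b, v, hv⟩ := dM_tot_surj (k := k+1+(r+1)) _ e.1.symm
    have e2 := e.2
    rw [hv, map_add, ← dC_phi] at e2
    have e3 : Ga k (r+1) a - phi (k+1+r+1) (g (k+1+r+1) b) =
      dC (k+1+(r+1)) (phi (k+1+(r+1)) v - qC (k := k+1+(r+1)) h) := by
      rw [e2, map_sub]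
      change _ + phi (k+1+r+1) (g (k+1+r+1) b) - _ - _ = _
      abel
    rw [phi_g, Ga_succ, ga_def] at e3
    generalize phi (k+1+(r+1)) v - qC (k := k+1+(r+1)) h = w at *
    have e4 : (1 - (-1 : ℤ) ^ (k + 1 + r)) • X0 b = 0 := by
      have := congrArg (qM (k := k+1+r)) e3
      rw [← duo_eta (k := k+1+r) w] at this
      apply g_bd (k := k+1+r) _ (- qM (k := k+1+r) w)
      have h2 : - g (k+1+r) ((1 - (-1 : ℤ) ^ (k + 1 + r)) • X0 b) = dM (k+1+r) (qM (k := k+1+r) w) := by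
        refine Eq.trans ?_ this
        rw [map_sub]
        refine Eq.trans ?_ (congrArg₂ (· - ·) (qM_duo (k := k+1+r) _ _).symm (qM_duo (k := k+1+r) _ _).symm)
        simp
      rw [map_neg, ← h2, neg_neg]
    rw [e4] at e3
    apply cyc_inj1 r w
    rw [← e3, Ga_succ]
    simp

theorem Ga_bd {k j a b} (ha : hA (k+1) j b) (e : a = (1 - (-1 : ℤ) ^ k) • X0 b) : ∀ (r : ℕ),
    ∃ h, hC (k+1+(r+1)) r j h ∧ Ga k (r+1) a = dC (k+1+(r+1)) h
  | 0 => by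
    refine ⟨duo (n := k+1) (g (k+1) b) 0, (hC_duo (k := k+1) _ _).2 ⟨hM_g ha, hC_zero⟩, ?_⟩
    refine Eq.trans ?_ (dC_duo (k := k+1) _ _).symm
    rw [Ga_succ]
    rw [dM_g, phi_g, ← e]
    simp; rfl
  | r + 1 => by
    obtain ⟨h, hh, e'⟩ := Ga_bd ha e r
    refine ⟨duo (n := k+1+(r+1)) 0 (-h), (hC_duo (k := k+1+(r+1)) _ _).2 ⟨hM_zero, hC_neg (by simpa using hh)⟩, ?_⟩
    rw [Ga_succ, e']
    refine Eq.trans ?_ (dC_duo (k := k+1+(r+1)) _ _).symm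
    simp

end Cyc

namespace Cyc

def inn {k : ℕ} : Option Bool → M k →ₗ[ℤ] M (k + 1)
  | none => triL LinearMap.id 0 0
  | some false => triL 0 LinearMap.id 0
  | some true => triL 0 0 LinearMap.id
@[simp] theorem inn_none {k} (f : M k) : inn none f = tri f 0 0 := rfl
@[simp] theorem inn_false {k} (f : M k) : inn (some false) f = tri 0 f 0 := rfl
@[simp] theorem inn_true {k} (f : M k) : inn (some true) f = tri 0 0 f := rfl

def inC {k : ℕ} : C k →ₗ[ℤ] C (k + 1) := duoL 0 LinearMap.id
def inM {k : ℕ} : M k →ₗ[ℤ] C (k + 1) := duoL LinearMap.id 0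
@[simp] theorem inC_def {k} (f : C k) : inC f = duo 0 f := rfl
@[simp] theorem inM_def {k} (f : M k) : inM f = duo f 0 := rfl

def d0 (a : Bool) : Bool → ℤ := fun b => if b = a then 1 else 0

def toM : (k : ℕ) → (Fin k → Option Bool) → Bool → M k
  | 0, _, a => d0 a
  | k + 1, w, a => inn (w 0) (toM k (Fin.tail w) a)
def toC : (k : ℕ) → (Fin k → Option Bool) → Bool → C k
  | 0, _, a => d0 a
  | k + 1, w, b => match w 0 with
    | none => inC (toC k (Fin.tail w) b)
    | some a => inM (toM k (Fin.tail w) a)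
theorem toM_succ (k) (w : Fin (k+1) → Option Bool) (a) :
    toM (k+1) w a = inn (w 0) (toM k (Fin.tail w) a) := rfl
theorem toC_none {k} {w : Fin (k+1) → Option Bool} (h : w 0 = none) (a) :
    toC (k+1) w a = inC (toC k (Fin.tail w) a) := by
  simp only [toC, h]
theorem toC_some {k} {w : Fin (k+1) → Option Bool} {c} (h : w 0 = some c) (a) :
    toC (k+1) w a = inM (toM k (Fin.tail w) c) := by
  simp only [toC, h]

noncomputable def act {k} (b : Bool) (f : M k) : M k := bif b then X k f else f

noncomputable def addM : (k : ℕ) → (Fin k → Option Bool) → Bool → Fin k → M k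
  | 0, _, _, _ => 0
  | k + 1, w, a, e => Fin.cases
      (match w 0 with
        | none => 0
        | some b => inn none (act b (toM k (Fin.tail w) a)))
      (fun e' => inn (w 0) (addM k (Fin.tail w) a e')) e
noncomputable def addC : (k : ℕ) → (Fin k → Option Bool) → Bool → Fin k → C k
  | 0, _, _, _ => 0
  | k + 1, w, b, e => match w 0 with
    | none => Fin.cases 0 (fun e' => inC (addC k (Fin.tail w) b e')) e
    | some a => Fin.cases (inC (phi k (toM k (Fin.tail w) a)))
        (fun e' => inM (addM k (Fin.tail w) a e')) e

section
variable {k : ℕ} {w : Fin (k+1) → Option Bool}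
theorem addM_zero_none (h : w 0 = none) (a) : addM (k+1) w a 0 = 0 := by
  simp only [addM, h, Fin.cases_zero]
theorem addM_zero_some {c} (h : w 0 = some c) (a) :
    addM (k+1) w a 0 = inn none (act c (toM k (Fin.tail w) a)) := by
  simp only [addM, h, Fin.cases_zero]
theorem addM_succ (a) (e : Fin k) :
    addM (k+1) w a e.succ = inn (w 0) (addM k (Fin.tail w) a e) := by
  simp only [addM, Fin.cases_succ]
theorem addC_zero_none (h : w 0 = none) (a) : addC (k+1) w a 0 = 0 := by
  simp only [addC, h, Fin.cases_zero]
theorem addC_zero_some {c} (h : w 0 = some c) (a) :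
    addC (k+1) w a 0 = inC (phi k (toM k (Fin.tail w) c)) := by
  simp only [addC, h, Fin.cases_zero]
theorem addC_succ_none (h : w 0 = none) (a) (e : Fin k) :
    addC (k+1) w a e.succ = inC (addC k (Fin.tail w) a e) := by
  simp only [addC, h, Fin.cases_succ]
theorem addC_succ_some {c} (h : w 0 = some c) (a) (e : Fin k) :
    addC (k+1) w a e.succ = inM (addM k (Fin.tail w) c e) := by
  simp only [addC, h, Fin.cases_succ]
end

def sg {n : ℕ} (w : Fin n → Option Bool) (e : Fin n) : ℕ :=
  (Finset.univ.filter fun f => w f = none ∧ f < e).card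

theorem sg_zero {n : ℕ} (w : Fin (n+1) → Option Bool) : sg w 0 = 0 := by
  simp [sg]
theorem sg_succ_none {n : ℕ} (w : Fin (n+1) → Option Bool) (h : w 0 = none) (e : Fin n) :
    sg w e.succ = sg (Fin.tail w) e + 1 := by
  simp [sg, Fin.card_filter_univ_succ, h, Fin.tail]; try congr
theorem sg_succ_some {n : ℕ} (w : Fin (n+1) → Option Bool) {c} (h : w 0 = some c) (e : Fin n) :
    sg w e.succ = sg (Fin.tail w) e := by
  simp [sg, Fin.card_filter_univ_succ, h, Fin.tail]; try congr

theorem dM_inn_none {k} (f : M k) : dM (k+1) (inn none f) = - inn none (dM k f) := by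
  rw [← map_neg]; simp
theorem dM_inn_some {k} (c) (f : M k) : dM (k+1) (inn (some c) f) =
    inn none (act c f) + inn (some c) (dM k f) := by
  cases c <;> simp [act, tri_add]
theorem dC_inC {k} (f : C k) : dC (k+1) (inC f) = - inC (dC k f) := by
  rw [← map_neg]; simp
theorem dC_inM {k} (f : M k) : dC (k+1) (inM f) = inC (phi k f) + inM (dM k f) := by
  simp [duo_add]

theorem dM_toM : ∀ {k : ℕ} (w : Fin k → Option Bool) (a),
    dM k (toM k w a) = ∑ e, (-1 : ℤ) ^ sg w e • addM k w a e
  | 0, w, a => by simp; rfl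
  | k + 1, w, a => by
    rw [Fin.sum_univ_succ, toM_succ]
    simp only [addM_succ, sg_zero, pow_zero, one_smul]
    rcases h : w 0 with _ | c
    · rw [dM_inn_none, dM_toM (Fin.tail w), addM_zero_none h, zero_add, map_sum, ← Finset.sum_neg_distrib]
      refine Finset.sum_congr rfl fun e _ => ?_
      rw [sg_succ_none w h, pow_succ, mul_neg_one, neg_smul, map_smul]
    · rw [dM_inn_some, dM_toM (Fin.tail w), addM_zero_some h, map_sum]
      congr 1
      refine Finset.sum_congr rfl fun e _ => ?_
      rw [sg_succ_some w h, map_smul]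

theorem dC_toC : ∀ {k : ℕ} (w : Fin k → Option Bool) (a),
    dC k (toC k w a) = ∑ e, (-1 : ℤ) ^ sg w e • addC k w a e
  | 0, w, a => by simp; rfl
  | k + 1, w, a => by
    rw [Fin.sum_univ_succ]
    simp only [sg_zero, pow_zero, one_smul]
    rcases h : w 0 with _ | c
    · rw [toC_none h, dC_inC, dC_toC (Fin.tail w), addC_zero_none h, zero_add, map_sum,
        ← Finset.sum_neg_distrib]
      refine Finset.sum_congr rfl fun e _ => ?_
      rw [sg_succ_none w h, pow_succ, mul_neg_one, neg_smul, map_smul, addC_succ_none h]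
    · rw [toC_some h, dC_inM, dM_toM (Fin.tail w), addC_zero_some h, map_sum]
      congr 1
      refine Finset.sum_congr rfl fun e _ => ?_
      rw [sg_succ_some w h, map_smul, addC_succ_some h]

theorem toM_update_zero {k} (w : Fin (k+1) → Option Bool) (c a) :
    toM (k+1) (Function.update w 0 c) a = inn c (toM k (Fin.tail w) a) := by
  rw [toM_succ, Fin.tail_update_zero, Function.update_self]
theorem toM_update_succ {k} (w : Fin (k+1) → Option Bool) (e : Fin k) (c a) :
    toM (k+1) (Function.update w e.succ c) a = inn (w 0) (toM k (Function.update (Fin.tail w) e c) a) := by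
  rw [toM_succ, Fin.tail_update_succ, Function.update_of_ne (Fin.succ_ne_zero e).symm]

theorem X0_d0 (a) : X0 (d0 a) = if a then 0 else d0 true := by
  funext b; cases a <;> cases b <;> rfl

theorem act_toM_none : ∀ {k : ℕ} {w : Fin k → Option Bool} (c a), (∀ f, w f = none) →
    act c (toM k w a) = if c && a then 0 else toM k w (c || a)
  | 0, w, c, a, _ => by
    cases c
    · simp [act]
    · simp only [act, toM, cond_true, Bool.true_and, Bool.true_or]; exact X0_d0 a
  | k + 1, w, c, a, h => by
    cases c
    · simp [act]
    · have := act_toM_none (k := k) (w := Fin.tail w) true a (fun f => h f.succ)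
      simp only [act, cond_true] at this
      simp only [act, cond_true, toM_succ, h 0, inn_none, X_tri, this]
      cases a <;> simp

theorem act_toM_some : ∀ {k : ℕ} {w : Fin k → Option Bool} (c a) (e : Fin k) {b},
    (∀ f < e, w f = none) → w e = some b →
    act c (toM k w a) = if c && b then 0 else toM k (Function.update w e (some (c || b))) a
  | 0, w, c, a, e, _, _, _ => e.elim0
  | k + 1, w, c, a, e, b, h, hb => by
    cases c
    · simp [act, ← hb]
    · induction e using Fin.cases with
      | zero =>
        rw [toM_update_zero]
        simp only [act, cond_true, toM_succ, hb]
        cases b <;> simp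
      | succ e =>
        have := act_toM_some (k := k) (w := Fin.tail w) true a e (b := b)
          (fun f hf => h f.succ (by simpa using hf)) hb
        simp only [act, cond_true] at this
        have h0 := h 0 (Fin.succ_pos e)
        rw [toM_update_succ]
        simp only [act, cond_true, toM_succ, h0, inn_none, X_tri, this]
        cases b <;> simp

theorem Y_toM : ∀ {k : ℕ} (w : Fin k → Option Bool) (a),
    Y k (toM k w a) = if a then 0 else toM k w true
  | 0, w, a => X0_d0 a
  | k + 1, w, a => by
    have h1 := Y_toM (Fin.tail w) a
    rw [toM_succ, toM_succ]
    rcases w 0 with _ | _ | _ <;> cases a <;> simp [h1]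

theorem phi_toM_none : ∀ {k : ℕ} {w : Fin k → Option Bool} (a), (∀ f, w f = none) →
    phi k (toM k w a) = toC k w a
  | 0, w, a, _ => rfl
  | k + 1, w, a, h => by
    rw [toM_succ, h 0, toC_none (h 0), inn_none, phi_tri, phi_toM_none (w := Fin.tail w) a (fun f => h f.succ)]
    simp

theorem toC_update_succ_none {k} {w : Fin (k+1) → Option Bool} (h : w 0 = none) (e : Fin k) (c a) :
    toC (k+1) (Function.update w e.succ c) a = inC (toC k (Function.update (Fin.tail w) e c) a) := by
  rw [toC_none, Fin.tail_update_succ]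
  rwa [Function.update_of_ne (Fin.succ_ne_zero e).symm]
theorem toC_update_succ_some {k} {w : Fin (k+1) → Option Bool} {b} (h : w 0 = some b) (e : Fin k) (c a) :
    toC (k+1) (Function.update w e.succ c) a = inM (toM k (Function.update (Fin.tail w) e c) b) := by
  rw [toC_some, Fin.tail_update_succ]
  rwa [Function.update_of_ne (Fin.succ_ne_zero e).symm]
theorem toC_update_zero_none {k} (w : Fin (k+1) → Option Bool) (a) :
    toC (k+1) (Function.update w 0 none) a = inC (toC k (Fin.tail w) a) := by
  rw [toC_none (Function.update_self _ _ _), Fin.tail_update_zero]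
theorem toC_update_zero_some {k} (w : Fin (k+1) → Option Bool) (c a) :
    toC (k+1) (Function.update w 0 (some c)) a = inM (toM k (Fin.tail w) c) := by
  rw [toC_some (Function.update_self _ _ _), Fin.tail_update_zero]

theorem phi_toM_some : ∀ {k : ℕ} {w : Fin k → Option Bool} (a a') (e : Fin k) {b},
    (∀ f < e, w f = none) → w e = some b →
    phi k (toM k w a) = if a && b then 0 else toC k (Function.update w e (some (a || b))) a'
  | 0, w, c, a, e, _, _, _ => e.elim0
  | k + 1, w, a, a', e, b, h, hb => by
    induction e using Fin.cases with
    | zero =>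
      rw [toC_update_zero_some, toM_succ, hb]
      have := Y_toM (Fin.tail w) a
      cases a <;> cases b <;> simp [this]
    | succ e =>
      have h0 := h 0 (Fin.succ_pos e)
      rw [toM_succ, h0, toC_update_succ_none h0, inn_none, phi_tri,
        phi_toM_some (k := k) (w := Fin.tail w) a a' e (b := b)
          (fun f hf => h f.succ (by simpa using hf)) hb]
      cases a <;> cases b <;> simp

theorem addM_none : ∀ {k : ℕ} {w : Fin k → Option Bool} (a) (e : Fin k) {c},
    (∀ f, e < f → w f = none) → w e = some c →
    addM k w a e = if c && a then 0 else toM k (Function.update w e none) (c || a)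
  | 0, _, _, e, _, _, _ => e.elim0
  | k + 1, w, a, e, c, h, hc => by
    induction e using Fin.cases with
    | zero =>
      rw [addM_zero_some hc, toM_update_zero, act_toM_none]
      · split_ifs <;> simp
      · intro f; exact h f.succ (Fin.succ_pos f)
    | succ e =>
      rw [addM_succ, toM_update_succ, addM_none (w := Fin.tail w) (c := c) a e
        (fun f hf => h f.succ (by simpa using hf)) hc]
      split_ifs <;> simp

theorem addM_some : ∀ {k : ℕ} {w : Fin k → Option Bool} (a) (e e' : Fin k) {c b},
    e < e' → (∀ f, e < f → f < e' → w f = none) → w e = some c → w e' = some b →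
    addM k w a e = if c && b then 0 else
      toM k (Function.update (Function.update w e none) e' (some (c || b))) a
  | 0, _, _, e, _, _, _, _, _, _, _ => e.elim0
  | k + 1, w, a, e, e', c, b, hlt, h, hc, hb => by
    obtain ⟨e', rfl⟩ := Fin.exists_succ_eq.2 (Fin.ne_zero_of_lt hlt)
    induction e using Fin.cases with
    | zero =>
      rw [addM_zero_some hc, toM_update_succ, Function.update_self, Fin.tail_update_zero,
        act_toM_some (w := Fin.tail w) c a e' (b := b) _ hb]
      · split_ifs <;> simp
      · intro f hf; exact h f.succ (Fin.succ_pos f) (by simpa using hf)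
    | succ e =>
      rw [addM_succ, toM_update_succ, Function.update_of_ne (Fin.succ_ne_zero e).symm,
        Fin.tail_update_succ, addM_some (w := Fin.tail w) (c := c) (b := b) a e e' (by simpa using hlt)
        (fun f hf hf' => h f.succ (by simpa using hf) (by simpa using hf')) hc hb]
      split_ifs <;> simp

theorem addC_only : ∀ {k : ℕ} {w : Fin k → Option Bool} (a) (e : Fin k) {c},
    (∀ f, f ≠ e → w f = none) → w e = some c →
    addC k w a e = toC k (Function.update w e none) c
  | 0, _, _, e, _, _, _ => e.elim0
  | k + 1, w, a, e, c, h, hc => by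
    induction e using Fin.cases with
    | zero =>
      rw [addC_zero_some hc, toC_update_zero_none, phi_toM_none]
      intro f; exact h f.succ (Fin.succ_ne_zero f)
    | succ e =>
      have h0 := h 0 (Fin.succ_ne_zero e).symm
      rw [addC_succ_none h0, toC_update_succ_none h0, addC_only (w := Fin.tail w) (c := c) a e
        (fun f hf => h f.succ (by simpa using hf)) hc]

theorem addC_next : ∀ {k : ℕ} {w : Fin k → Option Bool} (a a') (e e' : Fin k) {c b},
    e < e' → (∀ f, e < f → f < e' → w f = none) → w e = some c → w e' = some b →
    addC k w a e = if c && b then 0 else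
      toC k (Function.update (Function.update w e none) e' (some (c || b))) a'
  | 0, _, _, _, e, _, _, _, _, _, _, _ => e.elim0
  | k + 1, w, a, a', e, e', c, b, hlt, h, hc, hb => by
    obtain ⟨e', rfl⟩ := Fin.exists_succ_eq.2 (Fin.ne_zero_of_lt hlt)
    induction e using Fin.cases with
    | zero =>
      rw [addC_zero_some hc, toC_update_succ_none (Function.update_self _ _ _), Fin.tail_update_zero,
        phi_toM_some (w := Fin.tail w) c a' e' (b := b) _ hb]
      · split_ifs <;> simp
      · intro f hf; exact h f.succ (Fin.succ_pos f) (by simpa using hf)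
    | succ e =>
      have hu : Function.update w e.succ none 0 = w 0 :=
        Function.update_of_ne (Fin.succ_ne_zero e).symm _ _
      rcases h0 : w 0 with _ | d
      · rw [h0] at hu
        rw [addC_succ_none h0, toC_update_succ_none hu,
          Fin.tail_update_succ, addC_next (w := Fin.tail w) (c := c) (b := b) a a' e e' (by simpa using hlt)
          (fun f hf hf' => h f.succ (by simpa using hf) (by simpa using hf')) hc hb]
        split_ifs <;> simp
      · rw [h0] at hu
        rw [addC_succ_some h0, toC_update_succ_some hu,
          Fin.tail_update_succ, addM_some (w := Fin.tail w) (c := c) (b := b) d e e' (by simpa using hlt)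
          (fun f hf hf' => h f.succ (by simpa using hf) (by simpa using hf')) hc hb]
        split_ifs <;> simp

theorem addC_wrap : ∀ {k : ℕ} {w : Fin k → Option Bool} (a a') (e e' : Fin k) {c b},
    e' < e → (∀ f, e < f → w f = none) → (∀ f < e', w f = none) → w e = some c → w e' = some b →
    addC k w a e = if c && b then 0 else
      toC k (Function.update (Function.update w e none) e' (some (c || b))) a'
  | 0, _, _, _, e, _, _, _, _, _, _, _, _ => e.elim0
  | k + 1, w, a, a', e, e', c, b, hlt, h, h', hc, hb => by
    obtain ⟨e, rfl⟩ := Fin.exists_succ_eq.2 (Fin.ne_zero_of_lt hlt)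
    induction e' using Fin.cases with
    | zero =>
      rw [addC_succ_some hb, toC_update_zero_some, Fin.tail_update_succ,
        addM_none (w := Fin.tail w) (c := c) b e
          (fun f hf => h f.succ (by simpa using hf)) hc]
      split_ifs <;> simp
    | succ e' =>
      have h0 := h' 0 (Fin.succ_pos e')
      have hu : Function.update w e.succ none 0 = w 0 :=
        Function.update_of_ne (Fin.succ_ne_zero e).symm _ _
      rw [h0] at hu
      rw [addC_succ_none h0, toC_update_succ_none hu, Fin.tail_update_succ,
        addC_wrap (w := Fin.tail w) (c := c) (b := b) a a' e e' (by simpa using hlt)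
          (fun f hf => h f.succ (by simpa using hf))
          (fun f hf => h' f.succ (by simpa using hf)) hc hb]
      split_ifs <;> simp

/-! basis elements -/
def innB {k : ℕ} : Option Bool → BM k → BM (k + 1)
  | none, y => Sum.inl y
  | some false, y => Sum.inr (Sum.inl y)
  | some true, y => Sum.inr (Sum.inr y)
theorem innB_inj {k : ℕ} : ∀ {c c' : Option Bool} {y y' : BM k}, innB c y = innB c' y' → c = c' ∧ y = y'
  | none, none, _, _, h => ⟨rfl, Sum.inl_injective h⟩
  | some false, some false, _, _, h => ⟨rfl, Sum.inl_injective (Sum.inr_injective h)⟩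
  | some true, some true, _, _, h => ⟨rfl, Sum.inr_injective (Sum.inr_injective h)⟩
  | none, some false, _, _, h => by cases h
  | none, some true, _, _, h => by cases h
  | some false, none, _, _, h => by cases h
  | some true, none, _, _, h => by cases h
  | some true, some false, _, _, h => by cases h
  | some false, some true, _, _, h => by cases h
theorem inn_innB {k : ℕ} (f : M k) : ∀ (c c') (y : BM k), inn c f (innB c' y) = if c = c' then f y else 0
  | none, none, _ => rfl
  | some false, some false, _ => rfl
  | some true, some true, _ => rfl
  | none, some false, _ => rfl
  | none, some true, _ => rfl
  | some false, none, _ => rfl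
  | some true, none, _ => rfl
  | some true, some false, _ => rfl
  | some false, some true, _ => rfl
theorem innB_surj {k : ℕ} (y : BM (k+1)) : ∃ c z, y = innB c z := by
  rcases y with y | y | y
  · exact ⟨none, y, rfl⟩
  · exact ⟨some false, y, rfl⟩
  · exact ⟨some true, y, rfl⟩
def bM : (k : ℕ) → (Fin k → Option Bool) → Bool → BM k
  | 0, _, a => a
  | k + 1, w, a => innB (w 0) (bM k (Fin.tail w) a)
def bC : (k : ℕ) → (Fin k → Option Bool) → Bool → BC k
  | 0, _, a => a
  | k + 1, w, b => match w 0 with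
    | none => Sum.inr (bC k (Fin.tail w) b)
    | some a => Sum.inl (bM k (Fin.tail w) a)

open Classical in
theorem toM_apply : ∀ {k : ℕ} (w : Fin k → Option Bool) (a) (y : BM k),
    toM k w a y = if y = bM k w a then 1 else 0
  | 0, w, a, y => by simp only [toM, bM, d0]; congr
  | k + 1, w, a, y => by
    obtain ⟨c, z, rfl⟩ := innB_surj y
    rw [toM_succ, inn_innB, toM_apply]
    by_cases h1 : w 0 = c
    · subst h1
      rw [if_pos rfl]
      exact if_congr ⟨fun h => by rw [h]; rfl, fun h => (innB_inj h).2⟩ rfl rfl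
    · rw [if_neg h1]
      exact (if_neg (fun h => h1 (innB_inj h).1.symm)).symm
open Classical in
theorem toC_apply : ∀ {k : ℕ} (w : Fin k → Option Bool) (a) (y : BC k),
    toC k w a y = if y = bC k w a then 1 else 0
  | 0, w, a, y => by simp only [toC, bC, d0]; congr
  | k + 1, w, a, y => by
    have ih := toC_apply (Fin.tail w) a
    rcases h : w 0 with _ | c
    · rw [toC_none h]
      simp only [bC, h]
      rcases y with y | y
      · refine Eq.trans ?_ (if_neg (by intro h; cases h)).symm; rfl
      · exact (ih y).trans (if_congr ⟨fun h => congrArg Sum.inr h, fun h => Sum.inr_injective h⟩ rfl rfl)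
    · have ih' := toM_apply (Fin.tail w) c
      rw [toC_some h]
      simp only [bC, h]
      rcases y with y | y
      · exact (ih' y).trans (if_congr ⟨fun h => congrArg Sum.inl h, fun h => Sum.inl_injective h⟩ rfl rfl)
      · refine Eq.trans ?_ (if_neg (by intro h; cases h)).symm; rfl

theorem bM_inj : ∀ {k : ℕ} {w w' : Fin k → Option Bool} {a a'}, bM k w a = bM k w' a' → w = w' ∧ a = a'
  | 0, w, w', a, a', h => ⟨Subsingleton.elim _ _, h⟩
  | k + 1, w, w', a, a', h => by
    have key := innB_inj h
    obtain ⟨h1, h2⟩ := bM_inj key.2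
    refine ⟨?_, h2⟩
    rw [← Fin.cons_self_tail w, ← Fin.cons_self_tail w', h1, key.1]
theorem bC_inj : ∀ {k : ℕ} {w w' : Fin k → Option Bool} {a a'}, bC k w a = bC k w' a' →
    w = w' ∧ ((∀ f, w f = none) → a = a')
  | 0, w, w', a, a', h => ⟨Subsingleton.elim _ _, fun _ => h⟩
  | k + 1, w, w', a, a', h => by
    simp only [bC] at h
    rcases h0 : w 0 with _ | c <;> rcases h0' : w' 0 with _ | c' <;> simp only [h0, h0'] at h
    · obtain ⟨h1, h2⟩ := bC_inj (Sum.inr_injective h)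
      refine ⟨?_, fun h3 => h2 fun f => h3 f.succ⟩
      rw [← Fin.cons_self_tail w, ← Fin.cons_self_tail w', h1, h0, h0']
    · cases h
    · cases h
    · obtain ⟨h1, h2⟩ := bM_inj (Sum.inl_injective h)
      refine ⟨?_, fun h3 => by rw [h3 0] at h0; cases h0⟩
      rw [← Fin.cons_self_tail w, ← Fin.cons_self_tail w', h1, h0, h0', h2]
theorem bM_surj : ∀ {k : ℕ} (y : BM k), ∃ w a, bM k w a = y
  | 0, y => ⟨fun _ => none, y, rfl⟩
  | k + 1, y => by
    rcases y with y | y | y <;> obtain ⟨w, a, rfl⟩ := bM_surj y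
    · exact ⟨Fin.cons none w, a, rfl⟩
    · exact ⟨Fin.cons (some false) w, a, rfl⟩
    · exact ⟨Fin.cons (some true) w, a, rfl⟩
theorem bC_surj : ∀ {k : ℕ} (y : BC k), ∃ w a, bC k w a = y
  | 0, y => ⟨fun _ => none, y, rfl⟩
  | k + 1, y => by
    rcases y with y | y
    · obtain ⟨w, a, rfl⟩ := bM_surj y
      exact ⟨Fin.cons (some a) w, a, rfl⟩
    · obtain ⟨w, a, rfl⟩ := bC_surj y
      exact ⟨Fin.cons none w, a, rfl⟩

def cN {n : ℕ} (c : Option Bool) (w : Fin n → Option Bool) : ℕ :=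
  (Finset.univ.filter fun f => w f = c).card
theorem cN_succ {n : ℕ} (c : Option Bool) (w : Fin (n+1) → Option Bool) :
    cN c w = cN c (Fin.tail w) + if w 0 = c then 1 else 0 := by
  simp only [cN, Fin.card_filter_univ_succ, Fin.tail]
  split_ifs <;> rfl

theorem degM_bM : ∀ {k : ℕ} (w : Fin k → Option Bool) (a),
    degM k (bM k w a) = ((cN none w : ℤ), (cN (some true) w + if a then 1 else 0 : ℤ))
  | 0, w, a => by cases a <;> simp [degM, bM, cN]
  | k + 1, w, a => by
    have ih := degM_bM (Fin.tail w) a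
    rw [cN_succ, cN_succ]
    simp only [bM]
    rcases w 0 with _ | _ | _ <;> simp [degM, innB, ih]; ring

theorem degC_bC : ∀ {k : ℕ} (w : Fin k → Option Bool) (a),
    degC k (bC k w a) = ((cN none w : ℤ), (cN (some true) w + if (∀ f, w f = none) ∧ a then 1 else 0 : ℤ))
  | 0, w, a => by cases a <;> simp [degC, bC, cN]
  | k + 1, w, a => by
    have ih := degC_bC (Fin.tail w) a
    rw [cN_succ, cN_succ]
    simp only [bC]
    rcases h : w 0 with _ | c
    · simp [degC, ih, Fin.forall_fin_succ, h, Fin.tail]; congr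
    · have ih' := degM_bM (Fin.tail w) c
      simp [degC, ih', Fin.forall_fin_succ, h]

end Cyc

namespace Cyc
open OGraph

section graph
variable {n : ℕ} (hn : 0 < n)

abbrev Gr : OGraph := cycleGraph n hn

/-- component of a vertex -/
def cl (s : Finset (Fin n)) (v : Fin n) : (Gr hn).Comp s := Quot.mk _ v

theorem cl_surj (s : Finset (Fin n)) (K : (Gr hn).Comp s) : ∃ v : Fin n, cl hn s v = K :=
  Quot.exists_rep K

theorem cl_step (s : Finset (Fin n)) (v : Fin n) (hv : v ∈ s) :
    cl hn s v = cl hn s ⟨(v.val + 1) % n, Nat.mod_lt _ hn⟩ :=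
  Quot.sound ⟨v, hv, rfl⟩

/-- functions constant along edges descend -/
def lft {α : Type} (s : Finset (Fin n)) (t : Fin n → α)
    (h : ∀ v ∈ s, t v = t ⟨(v.val + 1) % n, Nat.mod_lt _ hn⟩) : (Gr hn).Comp s → α :=
  Quot.lift t (by
    rintro u v ⟨e, he, h2⟩
    have h3 := h e he
    rcases Sym2.eq_iff.1 h2 with ⟨rfl, rfl⟩ | ⟨rfl, rfl⟩
    · exact h3
    · exact h3.symm)

theorem lft_cl {α : Type} (s : Finset (Fin n)) (t : Fin n → α) (h) (v) :
    lft hn s t h (cl hn s v) = t v := rfl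

theorem cl_chain (s : Finset (Fin n)) (a b : Fin n) (hab : a ≤ b)
    (h : ∀ f, a ≤ f → f < b → f ∈ s) : cl hn s a = cl hn s b := by
  obtain ⟨b, hb⟩ := b
  obtain ⟨a, ha⟩ := a
  replace hab : a ≤ b := hab
  induction b, hab using Nat.le_induction with
  | base => rfl
  | succ b hab ih =>
    rw [ih (by omega) (fun f h1 h2 => h f h1 (lt_trans h2 (Fin.mk_lt_mk.2 (Nat.lt_succ_self b)))),
      cl_step hn s ⟨b, by omega⟩ (h _ (Fin.mk_le_mk.2 hab) (Fin.mk_lt_mk.2 (Nat.lt_succ_self b)))]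
    congr 2
    exact Nat.mod_eq_of_lt hb

theorem cl_univ (v v' : Fin n) : cl hn Finset.univ v = cl hn Finset.univ v' := by
  rcases le_total v v' with h | h
  · exact cl_chain hn _ _ _ h (fun _ _ _ => Finset.mem_univ _)
  · exact (cl_chain hn _ _ _ h (fun _ _ _ => Finset.mem_univ _)).symm

def IsNext (s : Finset (Fin n)) (v u : Fin n) : Prop :=
  u ∉ s ∧ ((v ≤ u ∧ ∀ f, v ≤ f → f < u → f ∈ s) ∨
    (u < v ∧ (∀ f, v ≤ f → f ∈ s) ∧ ∀ f, f < u → f ∈ s))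

theorem exists_next (s : Finset (Fin n)) (hs : s ≠ Finset.univ) (v : Fin n) : ∃ u, IsNext s v u := by
  by_cases h : ∃ f, v ≤ f ∧ f ∉ s
  · obtain ⟨u, ⟨h1, h2⟩, h3⟩ := WellFounded.has_min (wellFounded_lt (α := Fin n)) {f | v ≤ f ∧ f ∉ s} h
    refine ⟨u, h2, Or.inl ⟨h1, fun f h4 h5 => ?_⟩⟩
    by_contra h6
    exact h3 f ⟨h4, h6⟩ h5
  · push Not at h
    have : ∃ f, f ∉ s := by
      by_contra h'
      push Not at h'
      exact hs (Finset.eq_univ_iff_forall.2 h')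
    obtain ⟨u, h2, h3⟩ := WellFounded.has_min (wellFounded_lt (α := Fin n)) {f | f ∉ s} this
    refine ⟨u, h2, Or.inr ⟨?_, h, fun f h5 => ?_⟩⟩
    · by_contra h7
      exact h2 (h u (not_lt.1 h7))
    · by_contra h6
      exact h3 f h6 h5

theorem next_unique {s : Finset (Fin n)} {v u u' : Fin n} (h : IsNext s v u) (h' : IsNext s v u') :
    u = u' := by
  obtain ⟨h1, h2⟩ := h
  obtain ⟨h1', h2'⟩ := h'
  rcases lt_trichotomy u u' with hlt | rfl | hlt
  · exfalso
    rcases h2 with ⟨a, b⟩ | ⟨a, b, c⟩ <;> rcases h2' with ⟨a', b'⟩ | ⟨a', b', c'⟩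
    · exact h1 (b' u a hlt)
    · exact h1 (c' u hlt)
    · exact h1' (b _ a')
    · exact h1 (c' u hlt)
  · rfl
  · exfalso
    rcases h2 with ⟨a, b⟩ | ⟨a, b, c⟩ <;> rcases h2' with ⟨a', b'⟩ | ⟨a', b', c'⟩
    · exact h1' (b u' a' hlt)
    · exact h1 (b' _ a)
    · exact h1' (c u' hlt)
    · exact h1' (c u' hlt)

theorem next_self {s : Finset (Fin n)} {v : Fin n} (h : v ∉ s) : IsNext s v v :=
  ⟨h, Or.inl ⟨le_rfl, fun _ h1 h2 => absurd h2 (not_lt.2 h1)⟩⟩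

theorem next_step {s : Finset (Fin n)} {v u : Fin n} (hv : v ∈ s) (h : IsNext s v u) :
    IsNext s ⟨(v.val + 1) % n, Nat.mod_lt _ hn⟩ u := by
  obtain ⟨h1, h2⟩ := h
  have hne : u ≠ v := fun h => h1 (h ▸ hv)
  have hne' : u.val ≠ v.val := fun h => hne (Fin.ext h)
  refine ⟨h1, ?_⟩
  have hlt := v.2
  by_cases hc : v.val + 1 < n
  · have e : (⟨(v.val + 1) % n, Nat.mod_lt _ hn⟩ : Fin n) = ⟨v.val + 1, hc⟩ :=
      Fin.ext (Nat.mod_eq_of_lt hc)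
    rw [e]
    simp only [Fin.le_def, Fin.lt_def] at h2 ⊢
    rcases h2 with ⟨a, b⟩ | ⟨a, b, c⟩
    · exact Or.inl ⟨by omega, fun f h3 h4 => b f (by omega) h4⟩
    · exact Or.inr ⟨by omega, fun f h3 => b f (by omega), c⟩
  · have e : (⟨(v.val + 1) % n, Nat.mod_lt _ hn⟩ : Fin n) = ⟨0, hn⟩ := by
      apply Fin.ext
      have : v.val + 1 = n := by omega
      simp [this]
    rw [e]
    simp only [Fin.le_def, Fin.lt_def] at h2 ⊢
    rcases h2 with ⟨a, b⟩ | ⟨a, b, c⟩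
    · have := u.2; omega
    · exact Or.inl ⟨by omega, fun f h3 h4 => c f h4⟩

theorem next_cl {s : Finset (Fin n)} {v u : Fin n} (h : IsNext s v u) : cl hn s v = cl hn s u := by
  obtain ⟨h1, h2⟩ := h
  rcases h2 with ⟨a, b⟩ | ⟨a, b, c⟩
  · exact cl_chain hn s v u a b
  · have hl : n - 1 < n := by omega
    have e1 : cl hn s v = cl hn s ⟨n - 1, hl⟩ := by
      refine cl_chain hn s _ _ ?_ (fun f h3 _ => b f h3)
      rw [Fin.le_def]; have := v.2; simp; omega
    have e2 : cl hn s ⟨n - 1, hl⟩ = cl hn s ⟨0, hn⟩ := by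
      rw [cl_step hn s ⟨n - 1, hl⟩ (b _ (by rw [Fin.le_def]; have := v.2; simp; omega))]
      congr 2
      simp [Nat.sub_add_cancel hn]
    have e3 : cl hn s ⟨0, hn⟩ = cl hn s u :=
      cl_chain hn s _ _ (by rw [Fin.le_def]; simp) (fun f _ h4 => c f h4)
    rw [e1, e2, e3]

open Classical in
noncomputable def nx (s : Finset (Fin n)) (v : Fin n) : Fin n :=
  if h : s ≠ Finset.univ then (exists_next s h v).choose else v
theorem nx_spec {s : Finset (Fin n)} (h : s ≠ Finset.univ) (v : Fin n) : IsNext s v (nx s v) := by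
  rw [nx, dif_pos h]; exact (exists_next s h v).choose_spec
theorem nx_self {s : Finset (Fin n)} (h : s ≠ Finset.univ) {v : Fin n} (hv : v ∉ s) : nx s v = v :=
  next_unique (nx_spec h v) (next_self hv)
theorem nx_step {s : Finset (Fin n)} (h : s ≠ Finset.univ) {v : Fin n} (hv : v ∈ s) :
    nx s v = nx s ⟨(v.val + 1) % n, Nat.mod_lt _ hn⟩ :=
  next_unique (next_step hn hv (nx_spec h v)) (nx_spec h _)

noncomputable def nl {s : Finset (Fin n)} (h : s ≠ Finset.univ) : (Gr hn).Comp s → Fin n :=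
  lft hn s (nx s) (fun _ hv => nx_step hn h hv)
theorem nl_cl {s : Finset (Fin n)} (h : s ≠ Finset.univ) (v) : nl hn h (cl hn s v) = nx s v := rfl
theorem cl_nl {s : Finset (Fin n)} (h : s ≠ Finset.univ) (K) : cl hn s (nl hn h K) = K := by
  obtain ⟨v, rfl⟩ := cl_surj hn s K
  rw [nl_cl]
  exact (next_cl hn (nx_spec h v)).symm
theorem nl_not_mem {s : Finset (Fin n)} (h : s ≠ Finset.univ) (K) : nl hn h K ∉ s := by
  obtain ⟨v, rfl⟩ := cl_surj hn s K
  exact (nx_spec h v).1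
theorem nl_cl_self {s : Finset (Fin n)} (h : s ≠ Finset.univ) {v} (hv : v ∉ s) :
    nl hn h (cl hn s v) = v := by rw [nl_cl, nx_self h hv]

/-- word of an enhanced state -/
noncomputable def wd (s : Finset (Fin n)) (χ : (Gr hn).Comp s → Prop) : Fin n → Option Bool :=
  open Classical in fun k => if k ∈ s then none else some (decide (χ (cl hn s k)))
noncomputable def bt (s : Finset (Fin n)) (χ : (Gr hn).Comp s → Prop) : Bool :=
  open Classical in decide (χ (cl hn s ⟨0, hn⟩))

theorem wd_mem {s : Finset (Fin n)} {χ : (Gr hn).Comp s → Prop} {k} (h : k ∈ s) :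
    wd hn s χ k = none := by simp [wd, h]
open Classical in
theorem wd_not_mem {s : Finset (Fin n)} {χ : (Gr hn).Comp s → Prop} {k} (h : k ∉ s) :
    wd hn s χ k = some (decide (χ (cl hn s k))) := by simp [wd, h]
theorem wd_none {s : Finset (Fin n)} {χ : (Gr hn).Comp s → Prop} {k} :
    wd hn s χ k = none ↔ k ∈ s := by simp [wd]
theorem wd_true {s : Finset (Fin n)} {χ : (Gr hn).Comp s → Prop} {k} :
    wd hn s χ k = some true ↔ k ∉ s ∧ χ (cl hn s k) := by
  by_cases h : k ∈ s <;> simp [wd, h]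

noncomputable def Psi (S : (Gr hn).EState) : BC n := bC n (wd hn S.1 S.2) (bt hn S.1 S.2)

theorem Psi_inj_aux (s s' : Finset (Fin n)) (χ : (Gr hn).Comp s → Prop) (χ' : (Gr hn).Comp s' → Prop)
    (h1 : wd hn s χ = wd hn s' χ')
    (h2 : (∀ f, wd hn s χ f = none) → bt hn s χ = bt hn s' χ') :
    (⟨s, χ⟩ : Σ s : Finset (Fin n), ((Gr hn).Comp s → Prop)) = ⟨s', χ'⟩ := by
  have hs : s = s' := by
    apply Finset.ext
    intro k
    have := congrFun h1 k
    rw [← wd_none hn (s := s) (χ := χ), this]; exact wd_none hn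
  subst hs
  congr 1
  funext K
  by_cases hu : s = Finset.univ
  · have h3 := h2 (fun f => (wd_none hn).2 (by rw [hu]; exact Finset.mem_univ _))
    subst hu
    obtain ⟨v, rfl⟩ := cl_surj hn _ K
    rw [cl_univ hn v ⟨0, hn⟩]
    simpa [bt] using h3
  · rw [← cl_nl hn hu K]
    have h3 := nl_not_mem hn hu K
    have := congrFun h1 (nl hn hu K)
    rw [wd_not_mem hn h3, wd_not_mem hn h3] at this
    simpa using this

theorem Psi_inj : Function.Injective (Psi hn) := by
  rintro ⟨s, χ⟩ ⟨s', χ'⟩ h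
  obtain ⟨h1, h2⟩ := bC_inj h
  exact Psi_inj_aux hn s s' χ χ' h1 h2

theorem bC_ne_none : ∀ (n : ℕ) (w : Fin n → Option Bool) (a b : Bool) (k : Fin n), w k ≠ none →
    bC n w b = bC n w a := by
  intro n
  induction n with
  | zero => intro w a b k; exact k.elim0
  | succ n ih =>
    intro w a b k hk
    simp only [bC]
    rcases h0 : w 0 with _ | c
    · induction k using Fin.cases with
      | zero => exact absurd h0 hk
      | succ k => simp only [ih (Fin.tail w) a b k hk]; rfl
    · rfl

theorem Psi_surj : Function.Surjective (Psi hn) := by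
  intro y
  obtain ⟨w, a, rfl⟩ := bC_surj y
  let s : Finset (Fin n) := Finset.univ.filter fun k => w k = none
  have hs : ∀ k, k ∈ s ↔ w k = none := by intro k; simp [s]
  by_cases hu : s = Finset.univ
  · have hw : w = fun _ => none := by
      funext k; rw [← hs k, hu]; exact Finset.mem_univ _
    refine ⟨⟨s, fun _ => a = true⟩, ?_⟩
    have e1 : wd hn s (fun _ => a = true) = w := by
      funext k
      rw [wd_mem hn (by rw [hu]; exact Finset.mem_univ _), hw]
    have e2 : bt hn s (fun _ => a = true) = a := by simp [bt]
    simp only [Psi]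
    rw [e1, e2]
  · have e1 : wd hn s (fun K => w (nl hn hu K) = some true) = w := by
      funext k
      by_cases hk : k ∈ s
      · rw [wd_mem hn hk, (hs k).1 hk]
      · rw [wd_not_mem hn hk, nl_cl_self hn hu hk]
        rw [hs] at hk
        rcases h : w k with _ | _ | _ <;> simp_all
    refine ⟨⟨s, fun K => w (nl hn hu K) = some true⟩, ?_⟩
    simp only [Psi]
    rw [e1]
    have : ∃ k, w k ≠ none := by
      by_contra h
      push Not at h
      exact hu (Finset.eq_univ_iff_forall.2 fun k => (hs k).2 (h k))
    obtain ⟨k, hk⟩ := this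
    exact bC_ne_none n w _ _ k hk

theorem Psi_deg_aux (s : Finset (Fin n)) (χ : (Gr hn).Comp s → Prop) :
    degC n (bC n (wd hn s χ) (bt hn s χ)) =
      ((s.card : ℤ), (Nat.card {K : (Gr hn).Comp s // χ K} : ℤ)) := by
  rw [degC_bC]
  have e1 : cN none (wd hn s χ) = s.card := by
    rw [cN]; congr 1; ext k; simp [wd_none hn]
  rw [e1]
  congr 1
  by_cases hu : s = Finset.univ
  · subst hu
    have h1 : ∀ f, wd hn Finset.univ χ f = none := fun f => wd_mem hn (Finset.mem_univ _)
    have h2 : cN (some true) (wd hn Finset.univ χ) = 0 := by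
      rw [cN, Finset.card_eq_zero]; ext k; simp [h1]
    rw [h2]
    have hss : Subsingleton ((Gr hn).Comp (Finset.univ : Finset (Fin n))) := ⟨fun K K' => by
      obtain ⟨v, rfl⟩ := cl_surj hn _ K
      obtain ⟨v', rfl⟩ := cl_surj hn _ K'
      exact cl_univ hn v v'⟩
    by_cases hx : χ (cl hn Finset.univ ⟨0, hn⟩)
    · have hb : bt hn Finset.univ χ = true := by simpa [bt] using hx
      have : Nat.card {K : (Gr hn).Comp (Finset.univ : Finset (Fin n)) // χ K} = 1 := by
        rw [Nat.card_eq_one_iff_unique]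
        exact ⟨⟨fun a b => Subtype.ext (hss.elim _ _)⟩, ⟨⟨_, hx⟩⟩⟩
      rw [this, hb, if_pos ⟨h1, rfl⟩]; simp
    · have hb : bt hn Finset.univ χ = false := by simpa [bt] using hx
      have : Nat.card {K : (Gr hn).Comp (Finset.univ : Finset (Fin n)) // χ K} = 0 := by
        have : IsEmpty {k : (Gr hn).Comp (Finset.univ : Finset (Fin n)) // χ k} :=
          ⟨fun a => hx (by rw [hss.elim (cl hn Finset.univ ⟨0, hn⟩) a.1]; exact a.2)⟩
        exact Nat.card_of_isEmpty
      rw [this, hb, if_neg (by simp)]; simp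
  · rw [if_neg]
    · rw [add_zero, cN]
      congr 1
      rw [← Fintype.card_coe, ← Nat.card_eq_fintype_card]
      refine Nat.card_congr ⟨fun v => ⟨cl hn s v.1, ?_⟩, fun K => ⟨nl hn hu K.1, ?_⟩, fun v => ?_, fun K => ?_⟩
      · exact ((wd_true hn).1 (Finset.mem_filter.1 v.2).2).2
      · refine Finset.mem_filter.2 ⟨Finset.mem_univ _, (wd_true hn).2 ⟨nl_not_mem hn hu _, ?_⟩⟩
        rw [cl_nl]; exact K.2
      · exact Subtype.ext (nl_cl_self hn hu ((wd_true hn).1 (Finset.mem_filter.1 v.2).2).1)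
      · exact Subtype.ext (cl_nl hn hu K.1)
    · rintro ⟨h, -⟩
      exact hu (Finset.eq_univ_iff_forall.2 fun k => (wd_none hn).1 (h k))

theorem Psi_deg (S : (Gr hn).EState) :
    degC n (Psi hn S) = ((S.1.card : ℤ), ((Gr hn).jdeg S : ℤ)) :=
  Psi_deg_aux hn S.1 S.2

end graph
end Cyc

namespace Cyc
open OGraph

theorem addM_eq_zero : ∀ {k : ℕ} {w : Fin k → Option Bool} (a) (e : Fin k), w e = none →
    addM k w a e = 0
  | 0, _, _, e, _ => e.elim0
  | k + 1, w, a, e, h => by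
    induction e using Fin.cases with
    | zero => exact addM_zero_none h a
    | succ e => rw [addM_succ, addM_eq_zero (w := Fin.tail w) a e h, map_zero]
theorem addC_eq_zero : ∀ {k : ℕ} {w : Fin k → Option Bool} (a) (e : Fin k), w e = none →
    addC k w a e = 0
  | 0, _, _, e, _ => e.elim0
  | k + 1, w, a, e, h => by
    induction e using Fin.cases with
    | zero => exact addC_zero_none h a
    | succ e =>
      rcases h0 : w 0 with _ | c
      · rw [addC_succ_none h0, addC_eq_zero (w := Fin.tail w) a e h, map_zero]
      · rw [addC_succ_some h0, addM_eq_zero (w := Fin.tail w) c e h, map_zero]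

section graph
variable {n : ℕ} (hn : 0 < n)

noncomputable def Phi : ((Gr hn).EState →₀ ℤ) →ₗ[ℤ] C n :=
  Finsupp.linearCombination ℤ fun S => toC n (wd hn S.1 S.2) (bt hn S.1 S.2)

theorem Phi_single (S : (Gr hn).EState) (c : ℤ) :
    Phi hn (Finsupp.single S c) = c • toC n (wd hn S.1 S.2) (bt hn S.1 S.2) := by
  rw [Phi, Finsupp.linearCombination_single]

theorem Phi_apply (f : (Gr hn).EState →₀ ℤ) (T : (Gr hn).EState) : Phi hn f (Psi hn T) = f T := by
  classical
  induction f using Finsupp.induction_linear with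
  | zero => simp
  | add f g h1 h2 => rw [map_add, Pi.add_apply, h1, h2, Finsupp.add_apply]
  | single S c =>
    rw [Phi_single, Pi.smul_apply, toC_apply]
    have : (Psi hn T = bC n (wd hn S.1 S.2) (bt hn S.1 S.2)) ↔ S = T :=
      ⟨fun h => (Psi_inj hn h).symm, fun h => by rw [h]; rfl⟩
    by_cases h : S = T
    · rw [if_pos (this.2 h), h, Finsupp.single_eq_same]; simp
    · rw [if_neg (fun h' => h (this.1 h')), Finsupp.single_eq_of_ne' h]; simp

theorem Phi_inj : Function.Injective (Phi hn) := by
  intro f g h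
  ext T
  rw [← Phi_apply, h, Phi_apply]

instance : Finite (Gr hn).EState := by
  have : ∀ s, Finite ((Gr hn).Comp s) := fun s => by
    unfold OGraph.Comp; infer_instance
  infer_instance

theorem Phi_surj : Function.Surjective (Phi hn) := by
  intro z
  refine ⟨Finsupp.equivFunOnFinite.symm (fun S => z (Psi hn S)), ?_⟩
  funext y
  obtain ⟨S, rfl⟩ := Psi_surj hn y
  rw [Phi_apply]; rfl

theorem Phi_mem (f : (Gr hn).EState →₀ ℤ) (i j : ℕ) : f ∈ (Gr hn).Cmod i j ↔ hC n i j (Phi hn f) := by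
  rw [Cmod, Finsupp.mem_supported]
  constructor
  · intro h y hy
    obtain ⟨S, rfl⟩ := Psi_surj hn y
    rw [Phi_apply] at hy
    have := h (Finsupp.mem_support_iff.2 hy)
    rw [Psi_deg, this.1, this.2]
  · intro h S hS
    have := h (Psi hn S) (by rw [Phi_apply]; exact Finsupp.mem_support_iff.1 hS)
    rw [Psi_deg, Prod.mk.injEq] at this
    exact ⟨by exact_mod_cast this.1, by exact_mod_cast this.2⟩

def ins (e : Fin n) (s : Finset (Fin n)) : Finset (Fin n) := insert e s
theorem mem_ins {e f : Fin n} {s : Finset (Fin n)} : f ∈ ins e s ↔ f = e ∨ f ∈ s := Finset.mem_insert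
theorem mem_ins_self {e : Fin n} {s : Finset (Fin n)} : e ∈ ins e s := mem_ins.2 (Or.inl rfl)
theorem mem_ins_of_mem {e f : Fin n} {s : Finset (Fin n)} (h : f ∈ s) : f ∈ ins e s :=
  mem_ins.2 (Or.inr h)

abbrev Cp (s : Finset (Fin n)) : Type := (Gr hn).Comp s

def pp (s : Finset (Fin n)) (e : Fin n) : (Gr hn).Comp s → Cp hn (ins e s) :=
  qmap fun _ _ huv => huv.elim fun f hf => ⟨f, Finset.mem_insert_of_mem hf.1, hf.2⟩
theorem pp_cl (s : Finset (Fin n)) (e v : Fin n) : pp hn s e (cl hn s v) = cl hn (ins e s) v := rfl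

def nc (s : Finset (Fin n)) (χ : (Gr hn).Comp s → Prop) (e : Fin n) :
    Cp hn (ins e s) → Prop := fun K => ∃ k, pp hn s e k = K ∧ χ k

open Classical in
theorem addEdge_eq (s : Finset (Fin n)) (χ : (Gr hn).Comp s → Prop) (e : Fin n) :
    (Gr hn).addEdge ⟨s, χ⟩ e = if e ∈ s then 0 else
      if ∃ k1 k2 : (Gr hn).Comp s, k1 ≠ k2 ∧ pp hn s e k1 = pp hn s e k2 ∧ χ k1 ∧ χ k2 then 0
      else Finsupp.single ⟨ins e s, nc hn s χ e⟩ 1 := by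
  unfold addEdge
  by_cases he : e ∈ s
  · rw [if_pos he]; exact if_pos he
  · rw [if_neg he]; exact if_neg he

open Classical in
theorem Phi_addEdge_eq (s : Finset (Fin n)) (χ : (Gr hn).Comp s → Prop) (e : Fin n) (he : e ∉ s) :
    Phi hn ((Gr hn).addEdge ⟨s, χ⟩ e) =
      if ∃ k1 k2 : (Gr hn).Comp s, k1 ≠ k2 ∧ pp hn s e k1 = pp hn s e k2 ∧ χ k1 ∧ χ k2 then 0
      else toC n (wd hn (ins e s) (nc hn s χ e)) (bt hn (ins e s) (nc hn s χ e)) := by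
  rw [addEdge_eq, if_neg he]
  split_ifs with h1
  · simp
  · rw [Phi_single, one_smul]; rfl

theorem new_col {s : Finset (Fin n)} (χ : (Gr hn).Comp s → Prop) {e : Fin n} (he : e ∉ s)
    (hu : ins e s ≠ Finset.univ) {k : Fin n} (hk : k ∉ ins e s) :
    nc hn s χ e (cl hn (ins e s) k) ↔
      χ (cl hn s k) ∨ (k = nx (ins e s) e ∧ χ (cl hn s e)) := by
  have hs : s ≠ Finset.univ := fun h => he (h ▸ Finset.mem_univ _)
  constructor
  · rintro ⟨K, h1, h2⟩
    have h3 := cl_nl hn hs K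
    have h4 := nl_not_mem hn hs K
    generalize nl hn hs K = v at h3 h4
    subst h3
    rw [pp_cl] at h1
    have h5 := congrArg (nl hn hu) h1
    rw [nl_cl_self hn hu hk, nl_cl] at h5
    by_cases hv : v = e
    · subst hv; exact Or.inr ⟨h5.symm, h2⟩
    · rw [nx_self hu (by simp [mem_ins, hv, h4])] at h5
      subst h5; exact Or.inl h2
  · rintro (h | ⟨rfl, h⟩)
    · exact ⟨_, rfl, h⟩
    · exact ⟨cl hn s e, next_cl hn (nx_spec hu e), h⟩

theorem zero_iff {s : Finset (Fin n)} (χ : (Gr hn).Comp s → Prop) {e : Fin n} (he : e ∉ s)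
    (hu : ins e s ≠ Finset.univ) :
    (∃ k1 k2 : (Gr hn).Comp s, k1 ≠ k2 ∧ pp hn s e k1 = pp hn s e k2 ∧ χ k1 ∧ χ k2) ↔
      χ (cl hn s e) ∧ χ (cl hn s (nx (ins e s) e)) := by
  have hs : s ≠ Finset.univ := fun h => he (h ▸ Finset.mem_univ _)
  have he' := (nx_spec hu e).1
  rw [mem_ins, not_or] at he'
  constructor
  · rintro ⟨K1, K2, h0, h1, h2, h2'⟩
    have h3 := cl_nl hn hs K1
    have h4 := nl_not_mem hn hs K1
    generalize nl hn hs K1 = v at h3 h4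
    subst h3
    have h3' := cl_nl hn hs K2
    have h4' := nl_not_mem hn hs K2
    generalize nl hn hs K2 = v' at h3' h4'
    subst h3'
    rw [pp_cl, pp_cl] at h1
    have h5 := congrArg (nl hn hu) h1
    rw [nl_cl, nl_cl] at h5
    by_cases hv : v = e
    · subst hv
      by_cases hv' : v' = v
      · subst hv'; exact absurd rfl h0
      · rw [nx_self hu (v := v') (by simp [mem_ins, hv', h4'])] at h5
        subst h5; exact ⟨h2, h2'⟩
    · rw [nx_self hu (v := v) (by simp [mem_ins, hv, h4])] at h5
      by_cases hv' : v' = e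
      · subst hv'; subst h5; exact ⟨h2', h2⟩
      · rw [nx_self hu (v := v') (by simp [mem_ins, hv', h4'])] at h5
        subst h5; exact absurd rfl h0
  · rintro ⟨h1, h2⟩
    refine ⟨cl hn s e, cl hn s (nx (ins e s) e), fun h => he'.1 ?_, next_cl hn (nx_spec hu e), h1, h2⟩
    have := congrArg (nl hn hs) h
    rw [nl_cl_self hn hs he, nl_cl_self hn hs he'.2] at this
    exact this.symm

open Classical in
theorem new_wd {s : Finset (Fin n)} (χ : (Gr hn).Comp s → Prop) {e : Fin n} (he : e ∉ s)
    (hu : ins e s ≠ Finset.univ) :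
    wd hn (ins e s) (nc hn s χ e) =
      Function.update (Function.update (wd hn s χ) e none) (nx (ins e s) e)
        (some (decide (χ (cl hn s e)) || decide (χ (cl hn s (nx (ins e s) e))))) := by
  have he' := (nx_spec hu e).1
  funext k
  by_cases h1 : k = nx (ins e s) e
  · subst h1
    rw [Function.update_self, wd_not_mem hn he', ← Bool.decide_or]
    congr 1
    rw [decide_eq_decide, new_col hn χ he hu he']
    tauto
  · rw [Function.update_of_ne h1]
    by_cases h2 : k = e
    · subst h2
      rw [Function.update_self, wd_mem hn (mem_ins_self)]
    · rw [Function.update_of_ne h2]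
      by_cases h3 : k ∈ s
      · rw [wd_mem hn h3, wd_mem hn (mem_ins_of_mem h3)]
      · rw [wd_not_mem hn h3, wd_not_mem hn (by simp [mem_ins, h2, h3])]
        congr 1
        rw [decide_eq_decide, new_col hn χ he hu (by simp [mem_ins, h2, h3])]
        tauto

theorem Phi_addEdge (s : Finset (Fin n)) (χ : (Gr hn).Comp s → Prop) (e : Fin n) :
    Phi hn ((Gr hn).addEdge ⟨s, χ⟩ e) = addC n (wd hn s χ) (bt hn s χ) e := by
  classical
  by_cases he : e ∈ s
  · rw [addC_eq_zero _ _ (wd_mem hn he), addEdge_eq, if_pos he, map_zero]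
  rw [Phi_addEdge_eq hn s χ e he]
  by_cases hu : ins e s = Finset.univ
  · have hs : s ≠ Finset.univ := fun h => he (h ▸ Finset.mem_univ _)
    have hm : ∀ f, f ≠ e → f ∈ s := fun f hf => by
      have := Finset.mem_univ f
      rw [← hu] at this
      exact (mem_ins.1 this).resolve_left hf
    have hK : ∀ K : (Gr hn).Comp s, K = cl hn s e := fun K => by
      rw [← cl_nl hn hs K]
      congr 1
      by_contra h
      exact nl_not_mem hn hs K (hm _ h)
    rw [if_neg (by rintro ⟨k1, k2, h, -⟩; exact h (by rw [hK k1, hK k2]))]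
    rw [addC_only _ e (fun f hf => wd_mem hn (hm f hf)) (wd_not_mem hn he)]
    congr 1
    · funext k
      rw [wd_mem hn (by rw [hu]; exact Finset.mem_univ _)]
      by_cases h : k = e
      · subst h; rw [Function.update_self]
      · rw [Function.update_of_ne h, wd_mem hn (hm k h)]
    · rw [bt, decide_eq_decide]
      constructor
      · rintro ⟨K, -, h⟩
        rw [← hK K]; exact h
      · intro h
        refine ⟨_, ?_, h⟩
        rw [← hK (cl hn s ⟨0, hn⟩), pp_cl]
  · have hx := nx_spec hu e
    have he' := hx.1
    rw [mem_ins, not_or] at he'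
    have key : addC n (wd hn s χ) (bt hn s χ) e =
      if decide (χ (cl hn s e)) && decide (χ (cl hn s (nx (ins e s) e))) then 0 else
        toC n (Function.update (Function.update (wd hn s χ) e none) (nx (ins e s) e)
          (some (decide (χ (cl hn s e)) || decide (χ (cl hn s (nx (ins e s) e))))))
          (bt hn (ins e s) (nc hn s χ e)) := by
      rcases hx.2 with ⟨h1, h2⟩ | ⟨h1, h2, h3⟩
      · refine addC_next _ _ _ _ (lt_of_le_of_ne h1 (Ne.symm he'.1)) ?_ (wd_not_mem hn he) (wd_not_mem hn he'.2)
        intro f h3 h4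
        exact wd_mem hn ((mem_ins.1 (h2 f h3.le h4)).resolve_left h3.ne')
      · refine addC_wrap _ _ _ _ h1 ?_ ?_ (wd_not_mem hn he) (wd_not_mem hn he'.2)
        · intro f h4
          exact wd_mem hn ((mem_ins.1 (h2 f h4.le)).resolve_left h4.ne')
        · intro f h4
          exact wd_mem hn ((mem_ins.1 (h3 f h4)).resolve_left (h4.trans h1).ne)
    rw [key, ← new_wd hn χ he hu]
    refine if_congr ?_ rfl rfl
    rw [zero_iff hn χ he hu]
    simp

theorem sg_wd (s : Finset (Fin n)) (χ : (Gr hn).Comp s → Prop) (e : Fin n) :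
    (s.filter fun f => f < e).card = sg (wd hn s χ) e := by
  unfold sg
  congr 1
  ext f
  simp [wd_none hn]

theorem Phi_diff (f : (Gr hn).EState →₀ ℤ) : Phi hn ((Gr hn).diff f) = dC n (Phi hn f) := by
  induction f using Finsupp.induction_linear with
  | zero => simp
  | add f g h1 h2 => simp only [map_add, h1, h2]
  | single S c =>
    rw [Phi_single, map_smul, dC_toC]
    have : (Gr hn).diff (Finsupp.single S c) = c • (Gr hn).dState S := by
      simp [diff]
    rw [this, map_smul, dState, map_sum]
    congr 1
    refine Finset.sum_congr rfl fun e _ => ?_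
    rw [map_smul]
    have h2 := Phi_addEdge hn S.1 S.2 e
    have h3 := sg_wd hn S.1 S.2 e
    rw [← h3]
    exact congrArg _ h2

end graph
end Cyc

namespace Cyc
open OGraph

section abs
variable (G : OGraph)

noncomputable def mkH (i j : ℕ) : (G.Zmod i j).toAddSubgroup →+ G.Hmod i j :=
  QuotientAddGroup.mk' (AddSubgroup.comap (G.Zmod i j).toAddSubgroup.subtype (G.Bmod i j).toAddSubgroup)

theorem mkH_surj (i j : ℕ) : Function.Surjective (mkH G i j) := QuotientAddGroup.mk'_surjective _

theorem mkH_eq_zero (i j : ℕ) (z) : mkH G i j z = 0 ↔ (z : G.EState →₀ ℤ) ∈ G.Bmod i j :=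
  QuotientAddGroup.eq_zero_iff z

theorem H_sub (i j : ℕ) (h : ∀ z ∈ G.Zmod i j, z ∈ G.Bmod i j) : Subsingleton (G.Hmod i j) := by
  have : ∀ x : G.Hmod i j, x = 0 := fun x => by
    obtain ⟨z, rfl⟩ := mkH_surj G i j x
    exact (mkH_eq_zero G i j z).2 (h z.1 z.2)
  exact ⟨fun x y => by rw [this x, this y]⟩

noncomputable def homZ (i j : ℕ) (γ : (G.Zmod i j).toAddSubgroup) : ℤ →+ G.Hmod i j :=
  (mkH G i j).comp (zmultiplesHom _ γ)

theorem homZ_zero (i j : ℕ) (γ : (G.Zmod i j).toAddSubgroup) (t : ℤ) :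
    homZ G i j γ t = 0 ↔ t • (γ : G.EState →₀ ℤ) ∈ G.Bmod i j := by
  have : homZ G i j γ t = mkH G i j (t • γ) := rfl
  rw [this, mkH_eq_zero]; rfl

theorem homZ_surj (i j : ℕ) (γ : (G.Zmod i j).toAddSubgroup)
    (h : ∀ z ∈ G.Zmod i j, ∃ t : ℤ, z - t • (γ : G.EState →₀ ℤ) ∈ G.Bmod i j) :
    Function.Surjective (homZ G i j γ) := by
  intro x
  obtain ⟨z, rfl⟩ := mkH_surj G i j x
  obtain ⟨t, ht⟩ := h z.1 z.2
  refine ⟨t, ?_⟩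
  have e : homZ G i j γ t = mkH G i j (t • γ) := rfl
  rw [e, eq_comm, ← sub_eq_zero, ← map_sub, mkH_eq_zero]
  exact ht

theorem H_Z (i j : ℕ) (γ : (G.Zmod i j).toAddSubgroup)
    (h : ∀ z ∈ G.Zmod i j, ∃ t : ℤ, z - t • (γ : G.EState →₀ ℤ) ∈ G.Bmod i j)
    (h' : ∀ t : ℤ, t • (γ : G.EState →₀ ℤ) ∈ G.Bmod i j → t = 0) :
    Nonempty (G.Hmod i j ≃+ ℤ) := by
  refine ⟨(AddEquiv.ofBijective (homZ G i j γ) ⟨?_, homZ_surj G i j γ h⟩).symm⟩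
  rw [injective_iff_map_eq_zero]
  intro t ht
  exact h' t ((homZ_zero G i j γ t).1 ht)

theorem H_2 (i j : ℕ) (γ : (G.Zmod i j).toAddSubgroup)
    (h : ∀ z ∈ G.Zmod i j, ∃ t : ℤ, z - t • (γ : G.EState →₀ ℤ) ∈ G.Bmod i j)
    (h' : ∀ t : ℤ, t • (γ : G.EState →₀ ℤ) ∈ G.Bmod i j ↔ 2 ∣ t) :
    Nonempty (G.Hmod i j ≃+ ZMod 2) := by
  have e1 := QuotientAddGroup.quotientKerEquivOfSurjective (homZ G i j γ) (homZ_surj G i j γ h)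
  have e2 : (homZ G i j γ).ker = AddSubgroup.zmultiples ((2 : ℕ) : ℤ) := by
    ext t
    rw [AddMonoidHom.mem_ker, homZ_zero, h', Int.mem_zmultiples_iff]; rfl
  exact ⟨(e1.symm.trans (QuotientAddGroup.quotientAddEquivOfEq e2)).trans
    (Int.quotientZMultiplesNatEquivZMod 2)⟩
end abs

section tr
variable {n : ℕ} (hn : 0 < n)

theorem mem_Z (z) (i j : ℕ) : z ∈ (Gr hn).Zmod i j ↔ dC n (Phi hn z) = 0 ∧ hC n i j (Phi hn z) := by
  rw [Zmod, Submodule.mem_inf, Phi_mem, LinearMap.mem_ker, ← Phi_diff]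
  exact and_congr_left fun _ => (map_eq_zero_iff _ (Phi_inj hn)).symm

theorem mem_B (z) (i j : ℕ) : z ∈ (Gr hn).Bmod i j ↔
    ∃ h, hC n ((i : ℤ) - 1) j h ∧ Phi hn z = dC n h := by
  cases i with
  | zero =>
    rw [Bmod, Submodule.mem_bot]
    constructor
    · rintro rfl
      exact ⟨0, hC_zero, by simp⟩
    · rintro ⟨h, h1, h2⟩
      have : h = 0 := hC_neg_deg (by simp) h1
      subst this
      apply Phi_inj hn
      rw [h2]; simp
  | succ i =>
    rw [Bmod, Submodule.mem_map]
    have e : (((i + 1 : ℕ) : ℤ) - 1) = (i : ℤ) := by push_cast; ring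
    rw [e]
    constructor
    · rintro ⟨f, hf, rfl⟩
      exact ⟨Phi hn f, (Phi_mem hn f i j).1 hf, Phi_diff hn f⟩
    · rintro ⟨h, h1, h2⟩
      obtain ⟨f, rfl⟩ := Phi_surj hn h
      exact ⟨f, (Phi_mem hn f i j).2 h1, Phi_inj hn (by rw [Phi_diff, h2])⟩
end tr

theorem cyc_surj' {m : ℕ} (hm : 0 < m) {i j : ℤ} (z : C m) (h1 : hC m i j z) (h2 : dC m z = 0) :
    (∃ h, hC m (i-1) j h ∧ z = dC m h) ∨
    ∃ (k r : ℕ) (e : k + 1 + r = m) (a : Bool → ℤ), i = r ∧ hA k j a ∧ cond k a ∧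
      ∃ h : C (k+1+r), hC (k+1+r) (i-1) j h ∧ z = e ▸ (dC _ h + Ga k r a) := by
  cases m with
  | zero => omega
  | succ n =>
    rcases cyc_surj n z h1 h2 with h | ⟨k, r, e, a, h3, h4, h5, h, h6, h7⟩
    · exact Or.inl h
    · exact Or.inr ⟨k, r, by omega, a, h3, h4, h5, h, h6, h7⟩

theorem res_small (n : ℕ) (hn : 0 < n) (i j : ℕ) (h : n ≤ i + 1) : Subsingleton ((Gr hn).Hmod i j) := by
  refine H_sub _ i j fun z hz => ?_
  rw [mem_Z] at hz
  rw [mem_B]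
  rcases cyc_surj' hn _ hz.2 hz.1 with h | ⟨k, r, e, a, h3, h4, ⟨k', h5, -⟩, -⟩
  · exact h
  · exfalso; omega

theorem cond_zero {k : ℕ} (hk : 1 ≤ k) : cond k 0 :=
  ⟨k - 1, by omega, by funext b; cases b <;> simp [X0]⟩

theorem surjB {k r : ℕ} (hk : 1 ≤ k) {j : ℤ} (z : C (k+1+r)) (h1 : hC (k+1+r) r j z)
    (h2 : dC _ z = 0) : ∃ a h, hA k j a ∧ cond k a ∧ hC (k+1+r) ((r:ℤ)-1) j h ∧
      z = dC _ h + Ga k r a := by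
  rcases cyc_surj' (by omega) z h1 h2 with ⟨h, h3, h4⟩ | ⟨k', r', e, a, h3, h4, h5, h, h6, h7⟩
  · exact ⟨0, h, ⟨fun h => absurd rfl h, fun h => absurd rfl h⟩, cond_zero hk, h3, by rw [h4]; simp⟩
  · have hr : r' = r := by omega
    subst hr
    have hk' : k' = k := by omega
    subst hk'
    exact ⟨a, h, h4, h5, h6, h7⟩

theorem cond_true {k : ℕ} (hk : 1 ≤ k) : cond k (d0 true) :=
  ⟨k - 1, by omega, by funext b; cases b <;> simp [X0, d0]⟩
theorem cond_false {k : ℕ} (hk : Odd k) : cond k (d0 false) := by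
  obtain ⟨m, rfl⟩ := hk
  exact ⟨2 * m, rfl, by simp [pow_mul]⟩
theorem cond_even {k : ℕ} (hk : Even k) {a} (h : cond k a) : a false = 0 := by
  obtain ⟨k', rfl, h⟩ := h
  have hk' : Odd k' := by
    rw [Nat.even_add_one, Nat.not_even_iff_odd] at hk; exact hk
  have := congrFun h true
  rw [hk'.neg_one_pow] at this
  simp [X0] at this
  exact this

theorem res_sub (n : ℕ) (hn : 0 < n) (k r j : ℕ) (e : n = k + 1 + r) (hk : 1 ≤ k)
    (h1 : j ≠ k + 1) (h2 : j ≠ k ∨ Even k) : Subsingleton ((Gr hn).Hmod r j) := by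
  subst e
  refine H_sub _ r j fun z hz => ?_
  rw [mem_Z] at hz
  rw [mem_B]
  obtain ⟨a, h, h3, h4, h5, h6⟩ := surjB hk _ hz.2 hz.1
  have ha : a = 0 := by
    funext b
    cases b
    · rcases h2 with h2 | h2
      · by_contra h7; have := h3.1 h7; omega
      · exact cond_even h2 h4
    · by_contra h7; have := h3.2 h7; omega
  subst ha
  exact ⟨h, h5, by rw [h6]; simp⟩

section gen
variable {k r j : ℕ} (hn : 0 < k + 1 + r)

theorem gen_ex (b : Bool) (hj : j = if b then k + 1 else k) (hc : cond k (d0 b)) :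
    ∃ γ : ((Gr hn).Zmod r j).toAddSubgroup, Phi hn γ = Ga k r (d0 b) := by
  obtain ⟨f, hf⟩ := Phi_surj hn (Ga k r (d0 b))
  refine ⟨⟨f, (mem_Z hn f r j).2 ?_⟩, hf⟩
  rw [hf]
  refine ⟨dC_Ga hc r, hC_Ga ?_⟩
  subst hj
  cases b <;> simp [hA, d0]

theorem gen_surj (hk : 1 ≤ k) (b : Bool) (hj : j = if b then k + 1 else k)
    (γ : ((Gr hn).Zmod r j).toAddSubgroup) (hγ : Phi hn γ = Ga k r (d0 b)) :
    ∀ z ∈ (Gr hn).Zmod r j, ∃ t : ℤ, z - t • (γ : (Gr hn).EState →₀ ℤ) ∈ (Gr hn).Bmod r j := by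
  intro z hz
  rw [mem_Z] at hz
  obtain ⟨a, h, h3, h4, h5, h6⟩ := surjB hk _ hz.2 hz.1
  refine ⟨a b, (mem_B hn _ r j).2 ⟨h, h5, ?_⟩⟩
  have ha : a = a b • d0 b := by
    funext c
    subst hj
    cases b <;> cases c <;> simp [d0]
    · by_contra h7; have := h3.2 h7; simp at this
    · by_contra h7; have := h3.1 h7; simp at this
  rw [map_sub, map_smul, hγ, h6, ← map_smul (Ga k r), ← ha, add_sub_cancel_right]
end gen

theorem res_Z (n : ℕ) (hn : 0 < n) (k r j : ℕ) (b : Bool) (e : n = k + 1 + r) (hk : 1 ≤ k)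
    (hj : j = if b then k + 1 else k) (hb : if b then (r = 0 ∨ Even k) else Odd k) :
    Nonempty ((Gr hn).Hmod r j ≃+ ℤ) := by
  subst e
  have hc : cond k (d0 b) := by
    cases b
    · exact cond_false hb
    · exact cond_true hk
  obtain ⟨γ, hγ⟩ := gen_ex hn b hj hc
  refine H_Z _ r j γ (gen_surj hn hk b hj γ hγ) ?_
  intro t ht
  obtain ⟨h, -, h2⟩ := (mem_B hn _ r j).1 ht
  rw [map_smul, hγ, ← map_smul (Ga k r)] at h2
  cases r with
  | zero =>
    have := congrFun (cyc_inj0 h h2) b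
    simpa [d0] using this
  | succ r =>
    obtain ⟨c, hc⟩ := cyc_inj1 r h h2
    have := congrFun hc b
    cases b
    · simpa [d0, X0] using this
    · have hk' : Even k := by simpa using hb
      simpa [d0, hk'.neg_one_pow] using this

theorem res_2 (n : ℕ) (hn : 0 < n) (k r j : ℕ) (e : n = k + 1 + r) (hr : 0 < r)
    (hj : j = k + 1) (hk : Odd k) :
    Nonempty ((Gr hn).Hmod r j ≃+ ZMod 2) := by
  subst e
  have hk1 : 1 ≤ k := hk.pos
  have hj' : j = if true then k + 1 else k := by simpa using hj
  obtain ⟨γ, hγ⟩ := gen_ex hn true hj' (cond_true hk1)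
  refine H_2 _ r j γ (gen_surj hn hk1 true hj' γ hγ) ?_
  intro t
  rw [mem_B, map_smul, hγ, ← map_smul (Ga k r)]
  obtain ⟨r, rfl⟩ : ∃ r', r = r' + 1 := ⟨r - 1, by omega⟩
  constructor
  · rintro ⟨h, -, h2⟩
    obtain ⟨c, hc⟩ := cyc_inj1 r h h2
    have := congrFun hc true
    rw [hk.neg_one_pow] at this
    simp [d0, X0] at this
    exact ⟨_, this⟩
  · rintro ⟨c, rfl⟩
    obtain ⟨h, h1, h2⟩ := Ga_bd (k := k) (j := (j : ℤ)) (a := (2 * c) • d0 true) (b := c • d0 false)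
      (by subst hj; simp [hA, d0]) (by
        rw [hk.neg_one_pow]; funext b; cases b <;> simp [d0, X0]) r
    refine ⟨h, ?_, h2⟩
    have e : (((r + 1 : ℕ) : ℤ) - 1) = (r : ℤ) := by push_cast; ring
    rw [e]; exact h1

end Cyc
/-- the graph cohomology of the cycle graph `P_n`, `n ≥ 2`:
`H^0(P_n) ≅ ℤ{n} ⊕ ℤ{n−1}` if `n` is even and `ℤ{n}` if `n` is odd; for `i > 0`,
`H^i(P_n) ≅ ℤ₂{n−i} ⊕ ℤ{n−i−1}` if `n − i ≥ 2` is even, `ℤ{n−i}` if `n − i ≥ 2` is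
odd, and `0` if `n − i ≤ 1`. In particular `H^*(P_n)` contains 2-torsion for all
`n ≥ 3`. -/
theorem cohomology_cycle_graph (n : ℕ) (hn : 2 ≤ n) :
    letI G := cycleGraph n (by omega)
    (Even n →
      Nonempty (G.Hmod 0 n ≃+ ℤ) ∧ Nonempty (G.Hmod 0 (n - 1) ≃+ ℤ) ∧
        ∀ j : ℕ, j ≠ n → j ≠ n - 1 → Subsingleton (G.Hmod 0 j)) ∧
    (¬Even n →
      Nonempty (G.Hmod 0 n ≃+ ℤ) ∧ ∀ j : ℕ, j ≠ n → Subsingleton (G.Hmod 0 j)) ∧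
    (∀ i : ℕ, 0 < i → 2 ≤ n - i → Even (n - i) →
      Nonempty (G.Hmod i (n - i) ≃+ ZMod 2) ∧
        Nonempty (G.Hmod i (n - i - 1) ≃+ ℤ) ∧
        ∀ j : ℕ, j ≠ n - i → j ≠ n - i - 1 → Subsingleton (G.Hmod i j)) ∧
    (∀ i : ℕ, 0 < i → 2 ≤ n - i → ¬Even (n - i) →
      Nonempty (G.Hmod i (n - i) ≃+ ℤ) ∧
        ∀ j : ℕ, j ≠ n - i → Subsingleton (G.Hmod i j)) ∧
    (∀ i : ℕ, 0 < i → n - i ≤ 1 → ∀ j : ℕ, Subsingleton (G.Hmod i j)) ∧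
    (3 ≤ n → ∃ (i j : ℕ) (x : G.Hmod i j), x ≠ 0 ∧ x + x = 0) := by
  have hn0 : 0 < n := by omega
  refine ⟨fun he => ?_, fun he => ?_, fun i hi h2 he => ?_, fun i hi h2 he => ?_, fun i hi h2 j => ?_,
    fun h3 => ?_⟩
  · have ho : Odd (n - 1) := Nat.Even.sub_odd (by omega) he odd_one
    refine ⟨?_, ?_, fun j h1 h2 => ?_⟩
    · exact Cyc.res_Z n hn0 (n - 1) 0 n true (by omega) (by omega) (by simp; omega) (by simp)
    · exact Cyc.res_Z n hn0 (n - 1) 0 (n - 1) false (by omega) (by omega) (by simp) (by simpa using ho)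
    · exact Cyc.res_sub n hn0 (n - 1) 0 j (by omega) (by omega) (by omega) (Or.inl h2)
  · have ho : Even (n - 1) := by
      rw [Nat.even_sub (by omega)]; simpa using he
    refine ⟨?_, fun j h1 => ?_⟩
    · exact Cyc.res_Z n hn0 (n - 1) 0 n true (by omega) (by omega) (by simp; omega) (by simp)
    · exact Cyc.res_sub n hn0 (n - 1) 0 j (by omega) (by omega) (by omega) (Or.inr ho)
  · have ho : Odd (n - i - 1) := Nat.Even.sub_odd (by omega) he odd_one
    refine ⟨?_, ?_, fun j h1 h2 => ?_⟩
    · exact Cyc.res_2 n hn0 (n - i - 1) i (n - i) (by omega) hi (by omega) ho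
    · exact Cyc.res_Z n hn0 (n - i - 1) i (n - i - 1) false (by omega) (by omega) (by simp)
        (by simpa using ho)
    · exact Cyc.res_sub n hn0 (n - i - 1) i j (by omega) (by omega) (by omega) (Or.inl h2)
  · have ho : Even (n - i - 1) := by
      rw [Nat.even_sub (by omega)]; simpa using he
    refine ⟨?_, fun j h1 => ?_⟩
    · exact Cyc.res_Z n hn0 (n - i - 1) i (n - i) true (by omega) (by omega) (by simp; omega)
        (by simpa using Or.inr ho)
    · exact Cyc.res_sub n hn0 (n - i - 1) i j (by omega) (by omega) (by omega) (Or.inr ho)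
  · exact Cyc.res_small n hn0 i j (by omega)
  · obtain ⟨φ⟩ := Cyc.res_2 n hn0 1 (n - 2) 2 (by omega) (by omega) (by omega) odd_one
    refine ⟨n - 2, 2, φ.symm 1, ?_, ?_⟩
    · intro h
      rw [map_eq_zero_iff _ φ.symm.injective] at h
      exact absurd h (by decide)
    · rw [← map_add]
      have : (1 : ZMod 2) + 1 = 0 := by decide
      rw [this, map_zero]
end
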